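/- Let f : U → ℂ^n be a continuous map on a set U ⊆ ℂ, let E ⊆ ℂ^n, and let h be plurisubharmonic on ℂ^n with h = -∞ on E. Suppose f(U) ∩ E ≠ ∅ and the composition h ∘ f, when subharmonic-or-≡-∞ on a domain U, takes the value -∞ on the non-polar set f^{-1}(f(U) ∩ E). Then h ∘ f ≡ -∞ on U and hence h = -∞ on f(U), i.e., f(U) ⊆ E*_{ℂ^n} when f is holomorphic on a domain U ⊆ ℂ. -/

import Mathlib

open Metric Set MeasureTheory Filter Topology

noncomputable section

/-- Harmonicity on a set, expressed by continuity together with the circle mean value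
property on all closed balls contained in the set. -/
def HarmonicMVP (h : ℂ → ℝ) (s : Set ℂ) : Prop :=
  ContinuousOn h s ∧
  ∀ c : ℂ, ∀ r : ℝ, 0 < r → closedBall c r ⊆ s →
    h c = (2 * Real.pi)⁻¹ *
      ∫ θ in (0:ℝ)..(2 * Real.pi), h (c + r * Complex.exp (θ * Complex.I))

/-- Subharmonicity of a `[-∞, ∞)`-valued function (modeled as `EReal`-valued) on a set:
upper semicontinuity together with the harmonic majorant property: on every closed ball
contained in the set, `u` is dominated on the ball by every harmonic function dominating
it on the bounding circle. -/
def SubharmonicOn (u : ℂ → EReal) (U : Set ℂ) : Prop :=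
  UpperSemicontinuousOn u U ∧ (∀ z ∈ U, u z < ⊤) ∧
  ∀ c : ℂ, ∀ r : ℝ, 0 < r → closedBall c r ⊆ U →
    ∀ h : ℂ → ℝ, HarmonicMVP h (closedBall c r) →
      (∀ z ∈ sphere c r, u z ≤ (h z : EReal)) →
      ∀ z ∈ ball c r, u z ≤ (h z : EReal)

/-- A set `E ⊆ ℂ` is polar if it is contained in the `-∞` set of a subharmonic function
on `ℂ` which is not identically `-∞`. -/
def PolarSet (E : Set ℂ) : Prop :=
  ∃ u : ℂ → EReal, SubharmonicOn u Set.univ ∧ ¬ (∀ z, u z = ⊥) ∧ ∀ z ∈ E, u z = ⊥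

/-- Plurisubharmonicity on a subset of `ℂⁿ`: upper semicontinuity together with
subharmonicity of the restriction to every complex line. -/
def PlurisubharmonicOn {n : ℕ} (φ : (Fin n → ℂ) → EReal) (Ω : Set (Fin n → ℂ)) : Prop :=
  UpperSemicontinuousOn φ Ω ∧
  ∀ a b : Fin n → ℂ,
    SubharmonicOn (fun z : ℂ => φ (a + z • b)) {z : ℂ | a + z • b ∈ Ω}

/-- A set `E ⊆ ℂⁿ` is pluripolar (global form, equivalent to the local one by
Josefson's theorem): it is contained in the `-∞` set of a plurisubharmonic function on
`ℂⁿ` which is not identically `-∞`. -/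
def Pluripolar {n : ℕ} (E : Set (Fin n → ℂ)) : Prop :=
  ∃ φ : (Fin n → ℂ) → EReal, PlurisubharmonicOn φ Set.univ ∧
    ¬ (∀ z, φ z = ⊥) ∧ ∀ z ∈ E, φ z = ⊥

/-- The pluripolar hull `E*_Ω` of `E` relative to `Ω`. -/
def PluripolarHull {n : ℕ} (E Ω : Set (Fin n → ℂ)) : Set (Fin n → ℂ) :=
  {z ∈ Ω | ∀ φ : (Fin n → ℂ) → EReal, PlurisubharmonicOn φ Ω →
    (∀ w ∈ E, φ w = ⊥) → φ z = ⊥}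

theorem hm_mono {h : ℂ → ℝ} {s t : Set ℂ} (hh : HarmonicMVP h s) (hts : t ⊆ s) :
    HarmonicMVP h t :=
  ⟨hh.1.mono hts, fun c r hr hc => hh.2 c r hr (hc.trans hts)⟩

theorem hm_iff {h : ℂ → ℝ} {s : Set ℂ} : HarmonicMVP h s ↔ ContinuousOn h s ∧
    ∀ c : ℂ, ∀ r : ℝ, 0 < r → closedBall c r ⊆ s → h c = Real.circleAverage h c r := Iff.rfl

theorem circleInt_of {h : ℂ → ℝ} {s : Set ℂ} (hh : ContinuousOn h s) {c : ℂ} {r : ℝ} (hr : 0 < r)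
    (hc : closedBall c r ⊆ s) : CircleIntegrable h c r :=
  ContinuousOn.circleIntegrable hr.le (hh.mono (sphere_subset_closedBall.trans hc))

theorem hm_const (a : ℝ) (s : Set ℂ) : HarmonicMVP (fun _ => a) s := by
  rw [hm_iff]
  refine ⟨continuousOn_const, fun c r hr hc => ?_⟩
  rw [Real.circleAverage_const]

theorem hm_add {g h : ℂ → ℝ} {s : Set ℂ} (hg : HarmonicMVP g s) (hh : HarmonicMVP h s) :
    HarmonicMVP (fun z => g z + h z) s := by
  rw [hm_iff] at *
  refine ⟨hg.1.add hh.1, fun c r hr hc => ?_⟩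
  rw [Real.circleAverage_fun_add (circleInt_of hg.1 hr hc) (circleInt_of hh.1 hr hc),
    ← hg.2 c r hr hc, ← hh.2 c r hr hc]

theorem hm_smul {h : ℂ → ℝ} {s : Set ℂ} (a : ℝ) (hh : HarmonicMVP h s) :
    HarmonicMVP (fun z => a * h z) s := by
  rw [hm_iff] at *
  refine ⟨continuousOn_const.mul hh.1, fun c r hr hc => ?_⟩
  have := Real.circleAverage_fun_smul (a := a) (f := h) (c := c) (R := r)
  simp only [smul_eq_mul] at this
  rw [this, ← hh.2 c r hr hc]

theorem hm_sub {g h : ℂ → ℝ} {s : Set ℂ} (hg : HarmonicMVP g s) (hh : HarmonicMVP h s) :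
    HarmonicMVP (fun z => g z - h z) s := by
  have := hm_add hg (hm_smul (-1) hh)
  simpa [sub_eq_add_neg] using this

theorem hm_shift {h : ℂ → ℝ} {z0 : ℂ} {r : ℝ} (hh : HarmonicMVP h (closedBall z0 r)) :
    HarmonicMVP (fun w => h (z0 + w)) (closedBall 0 r) := by
  rw [hm_iff] at *
  have key : ∀ w c : ℂ, ∀ ρ, w ∈ closedBall c ρ → z0 + w ∈ closedBall (z0 + c) ρ := by
    intro w c ρ hw
    simpa [dist_eq_norm] using hw
  refine ⟨hh.1.comp (by fun_prop) (fun w hw => by simpa using key w 0 r hw), fun c ρ hρ hc => ?_⟩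
  rw [hh.2 (z0 + c) ρ hρ ?_]
  · simp [Real.circleAverage, circleMap, add_assoc]
  · intro y hy
    have : y - z0 ∈ closedBall (0:ℂ) r := hc (by
      simp only [mem_closedBall, dist_eq_norm] at hy ⊢
      rwa [show y - z0 - c = y - (z0 + c) by ring])
    simpa [dist_eq_norm] using this

theorem hm_re {F : ℂ → ℂ} {c : ℂ} {R : ℝ} (hF : DiffContOnCl ℂ F (ball c R)) (hR : 0 < R) :
    HarmonicMVP (fun z => (F z).re) (closedBall c R) := by
  rw [hm_iff]
  have hc : ContinuousOn F (closedBall c R) := by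
    have := hF.continuousOn; rwa [closure_ball c hR.ne'] at this
  refine ⟨Complex.continuous_re.comp_continuousOn hc, fun c' r hr hcr => ?_⟩
  have hsub : ball c' r ⊆ ball c R := by
    have := interior_mono hcr
    rwa [interior_closedBall c' hr.ne', interior_closedBall c hR.ne'] at this
  have h1 : DiffContOnCl ℂ F (ball c' |r|) := by
    rw [abs_of_pos hr]; exact hF.mono hsub
  have h2 := h1.circleAverage
  have h3 : CircleIntegrable F c' r :=
    ContinuousOn.circleIntegrable hr.le (hc.mono (sphere_subset_closedBall.trans hcr))
  have h4 := Complex.reCLM.circleAverage_comp_comm h3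
  rw [h2] at h4
  exact h4.symm

theorem hm_re' {F : ℂ → ℂ} {c : ℂ} {R : ℝ} (hF : DifferentiableOn ℂ F (closedBall c R))
    (hR : 0 < R) : HarmonicMVP (fun z => (F z).re) (closedBall c R) := by
  apply hm_re _ hR
  apply DifferentiableOn.diffContOnCl
  rwa [closure_ball c hR.ne']

theorem hm_le {A K : ℂ → ℝ} {z : ℂ} {r : ℝ} (hr : 0 < r) (hA : HarmonicMVP A (closedBall z r))
    (hK : HarmonicMVP K (closedBall z r)) (h : ∀ x ∈ sphere z r, A x ≤ K x) : A z ≤ K z := by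
  rw [hm_iff] at *
  rw [hA.2 z r hr le_rfl, hK.2 z r hr le_rfl]
  apply Real.circleAverage_mono (circleInt_of hA.1 hr le_rfl) (circleInt_of hK.1 hr le_rfl)
  rwa [abs_of_pos hr]

/-- local (centre) majorant property -/
def SubAt (v : ℂ → EReal) (z0 : ℂ) : Prop :=
  ∀ᶠ ρ in 𝓝[>] (0:ℝ), ∀ K : ℂ → ℝ, HarmonicMVP K (closedBall z0 ρ) →
    (∀ z ∈ sphere z0 ρ, v z ≤ (K z : EReal)) → v z0 ≤ (K z0 : EReal)

theorem eventually_small {z : ℂ} {W : Set ℂ} (hW : W ∈ 𝓝 z) :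
    ∀ᶠ ρ in 𝓝[>] (0:ℝ), closedBall z ρ ⊆ W := by
  obtain ⟨e, he, h⟩ := Metric.mem_nhds_iff.1 hW
  filter_upwards [Ioo_mem_nhdsGT he] with ρ hρ
  exact (closedBall_subset_ball hρ.2).trans h

theorem usc_add_real {X : Type*} [TopologicalSpace X] {v : X → EReal} {g : X → ℝ} {s : Set X}
    (hv : UpperSemicontinuousOn v s) (hg : ContinuousOn g s) :
    UpperSemicontinuousOn (fun z => v z + (g z : EReal)) s := by
  apply hv.add'
  · exact (continuous_coe_real_ereal.comp_continuousOn hg).upperSemicontinuousOn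
  · intro x hx
    exact EReal.continuousAt_add (Or.inr (by simp)) (Or.inr (by simp))

theorem le_of_add_le {a : EReal} {g m : ℝ} (h : a + (g : EReal) ≤ (m : EReal)) :
    a ≤ ((m - g : ℝ) : EReal) := by
  induction a with
  | bot => simp
  | top => simp at h
  | coe x => norm_cast at *; linarith

/-- The identity `|w|^2 = |z0|^2 + 2 Re + ρ^2` on a circle, harmonic replacement. -/
theorem sq_sphere {p z0 w : ℂ} {ρ : ℝ} (hw : w ∈ sphere z0 ρ) :
    ‖w - p‖ ^ 2 = ‖z0 - p‖ ^ 2 + ρ ^ 2 + 2 * ((starRingEnd ℂ (z0 - p)) * (w - z0)).re := by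
  have h : ‖w - z0‖ = ρ := by simpa [dist_eq_norm] using hw
  rw [← h, Complex.sq_norm, Complex.sq_norm, Complex.sq_norm]
  simp [Complex.normSq_apply]
  ring

theorem hm_sq (p z0 : ℂ) {ρ : ℝ} (hρ : 0 < ρ) : HarmonicMVP (fun w => ‖z0 - p‖ ^ 2 + ρ ^ 2 +
    2 * ((starRingEnd ℂ (z0 - p)) * (w - z0)).re) (closedBall z0 ρ) := by
  apply hm_add (hm_const _ _)
  apply hm_smul
  apply hm_re' _ hρ
  fun_prop

/-- domination principle -/
theorem domination {C W : Set ℂ} (hC : IsCompact C) (hW : IsOpen W) (hWC : W ⊆ C)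
    {v : ℂ → EReal} {K : ℂ → ℝ} (hv : UpperSemicontinuousOn v C) (hvt : ∀ z ∈ C, v z < ⊤)
    (hK : ContinuousOn K C) (hvs : ∀ z ∈ W, SubAt v z)
    (hKh : ∀ z ∈ W, ∀ᶠ ρ in 𝓝[>] (0:ℝ), HarmonicMVP K (closedBall z ρ))
    (hb : ∀ z ∈ C \ W, v z ≤ (K z : EReal)) : ∀ z ∈ C, v z ≤ (K z : EReal) := by
  by_contra hcon
  push Not at hcon
  obtain ⟨z1, hz1, hlt⟩ := hcon
  obtain ⟨a, ha1, ha2⟩ := EReal.lt_iff_exists_real_btwn.1 hlt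
  have ha1' : K z1 < a := by exact_mod_cast ha1
  obtain ⟨B, hB⟩ := hC.isBounded.exists_norm_le
  have hB0 : 0 ≤ B := (norm_nonneg _).trans (hB z1 hz1)
  set η := a - K z1 with hη
  have hηp : 0 < η := by linarith
  obtain ⟨δ, hδ, hδB⟩ : ∃ δ : ℝ, 0 < δ ∧ δ * B ^ 2 < η := by
    refine ⟨η / (B ^ 2 + 1), by positivity, ?_⟩
    rw [div_mul_eq_mul_div, div_lt_iff₀ (by positivity)]
    nlinarith
  have husc : UpperSemicontinuousOn (fun z => v z + ((δ * ‖z‖ ^ 2 - K z : ℝ) : EReal)) C := by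
    apply usc_add_real hv
    fun_prop
  obtain ⟨z0, hz0, hmax⟩ := husc.exists_isMaxOn ⟨z1, hz1⟩ hC
  have hm1 := hmax hz1
  simp only [mem_ofPred_eq] at hm1
  -- v z0 real
  have hz0t := hvt z0 hz0
  have hlow : ((η : ℝ) : EReal) < v z0 + ((δ * ‖z0‖ ^ 2 - K z0 : ℝ) : EReal) := by
    refine lt_of_lt_of_le ?_ hm1
    generalize v z1 = b at *
    induction b with
    | bot => simp at ha2
    | top => rw [EReal.top_add_coe]; exact EReal.coe_lt_top _
    | coe x =>
      norm_cast at *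
      have : 0 ≤ δ * ‖z1‖ ^ 2 := by positivity
      linarith
  obtain ⟨x, hx⟩ : ∃ x : ℝ, v z0 = x := by
    generalize v z0 = b at *
    induction b with
    | bot => simp at hlow
    | top => simp at hz0t
    | coe x => exact ⟨x, rfl⟩
  rw [hx] at hlow
  have hlow' : η < x + (δ * ‖z0‖ ^ 2 - K z0) := by exact_mod_cast hlow
  by_cases hzW : z0 ∈ W
  · obtain ⟨ρ, h1, h2, h3, h4⟩ := ((hvs z0 hzW).and ((hKh z0 hzW).and
      ((eventually_small (hW.mem_nhds hzW)).and self_mem_nhdsWithin))).exists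
    have h4 : 0 < ρ := h4
    have := h1 (fun w => (K w + (x + (δ * ‖z0‖ ^ 2 - K z0))) - δ * (‖z0 - 0‖ ^ 2 + ρ ^ 2 +
      2 * ((starRingEnd ℂ (z0 - 0)) * (w - z0)).re)) ?_ ?_
    · rw [hx] at this
      have : x ≤ _ := EReal.coe_le_coe_iff.1 this
      simp at this
      have : 0 < δ * ρ ^ 2 := by positivity
      linarith
    · exact hm_sub (hm_add h2 (hm_const _ _)) (hm_smul _ (hm_sq 0 z0 h4))
    · intro w hw
      have hwC : w ∈ C := hWC (h3 (sphere_subset_closedBall hw))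
      have := hmax hwC
      simp only [mem_ofPred_eq, hx] at this
      have := le_of_add_le (m := x + (δ * ‖z0‖ ^ 2 - K z0)) (by exact_mod_cast this)
      refine this.trans (le_of_eq ?_)
      rw [← sq_sphere hw]
      congr 1
      simp
      ring
  · have := hb z0 ⟨hz0, hzW⟩
    rw [hx] at this
    have : x ≤ K z0 := by exact_mod_cast this
    have : δ * ‖z0‖ ^ 2 ≤ δ * B ^ 2 := by
      gcongr; exact hB z0 hz0
    linarith

theorem sub_of_subAt {V : Set ℂ} {v : ℂ → EReal}
    (hv : UpperSemicontinuousOn v V) (hvt : ∀ z ∈ V, v z < ⊤) (hs : ∀ z ∈ V, SubAt v z) :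
    SubharmonicOn v V := by
  refine ⟨hv, hvt, fun c r hr hc H hH hb z hz => ?_⟩
  refine domination (isCompact_closedBall c r) isOpen_ball ball_subset_closedBall (hv.mono hc)
    (fun z hz => hvt z (hc hz)) hH.1 (fun z hz => hs z (hc (ball_subset_closedBall hz)))
    (fun z hz => ?_) ?_ z (ball_subset_closedBall hz)
  · filter_upwards [eventually_small (isOpen_ball.mem_nhds hz)] with ρ hρ
    exact hm_mono hH (hρ.trans ball_subset_closedBall)
  · intro z hz
    apply hb
    rw [closedBall_sdiff_ball] at hz
    exact hz

theorem subAt_of_sub {V : Set ℂ} (hV : IsOpen V) {v : ℂ → EReal} (hs : SubharmonicOn v V)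
    {z : ℂ} (hz : z ∈ V) : SubAt v z := by
  filter_upwards [eventually_small (hV.mem_nhds hz), self_mem_nhdsWithin] with ρ hρ hρ0 K hK hb
  exact hs.2.2 z ρ hρ0 hρ K hK hb z (mem_ball_self hρ0)

/-- touching from below transfers `SubAt`. -/
theorem subAt_touch {u v : ℂ → EReal} {z : ℂ} (hu : SubAt u z) (hle : ∀ᶠ w in 𝓝 z, u w ≤ v w)
    (he : v z = u z) : SubAt v z := by
  filter_upwards [hu, eventually_small hle] with ρ h1 h2 K hK hb
  rw [he]
  exact h1 K hK fun w hw => (h2 (sphere_subset_closedBall hw)).trans (hb w hw)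

theorem subAt_sq (p z : ℂ) {a b : ℝ} (ha : 0 ≤ a) :
    SubAt (fun w => ((a * (‖w - p‖ ^ 2 - b) : ℝ) : EReal)) z := by
  filter_upwards [self_mem_nhdsWithin] with ρ hρ K hK hb
  have hρ : 0 < ρ := hρ
  have := hm_le hρ (hm_smul a (hm_sub (hm_sq p z hρ) (hm_const b _))) hK ?_
  · norm_cast
    simp at this ⊢
    have : 0 ≤ a * ρ ^ 2 := by positivity
    linarith
  · intro w hw
    rw [← sq_sphere hw]
    exact_mod_cast hb w hw

theorem usc_comp {X Y : Type*} [TopologicalSpace X] [TopologicalSpace Y] {h : Y → EReal} {g : X → Y}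
    {s : Set X} {t : Set Y} (hh : UpperSemicontinuousOn h t) (hg : ContinuousOn g s)
    (hm : MapsTo g s t) :
    UpperSemicontinuousOn (fun x => h (g x)) s := by
  rw [upperSemicontinuousOn_iff] at *
  intro x hx
  have h1 := hh (g x) (hm hx)
  rw [upperSemicontinuousWithinAt_iff] at *
  intro y hy
  exact ((hg x hx).tendsto_nhdsWithin hm).eventually (h1 y hy)

theorem taylor2 {n : ℕ} {U : Set ℂ} (hU : IsOpen U) {f : ℂ → Fin n → ℂ}
    (hf : DifferentiableOn ℂ f U) {z0 : ℂ} (hz : z0 ∈ U) :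
    ∃ (b : Fin n → ℂ) (g : ℂ → Fin n → ℂ), DifferentiableOn ℂ g U ∧
      ∀ w, f (z0 + w) = f z0 + w • b + w ^ 2 • g (z0 + w) := by
  have hn := hU.mem_nhds hz
  refine ⟨dslope f z0 z0, dslope (dslope f z0) z0, ?_, ?_⟩
  · rw [Complex.differentiableOn_dslope hn, Complex.differentiableOn_dslope hn]
    exact hf
  · intro w
    have h1 := sub_smul_dslope f z0 (z0 + w)
    have h2 := sub_smul_dslope (dslope f z0) z0 (z0 + w)
    simp only [add_sub_cancel_left] at h1 h2
    rw [sq, mul_smul, h2, smul_sub, h1]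
    abel

theorem usc_bdd {X : Type*} [TopologicalSpace X] {v : X → EReal} {C : Set X} (hC : IsCompact C)
    (hv : UpperSemicontinuousOn v C) (hvt : ∀ z ∈ C, v z < ⊤) :
    ∃ M : ℝ, ∀ z ∈ C, v z ≤ (M : EReal) := by
  rcases C.eq_empty_or_nonempty with rfl | hne
  · exact ⟨0, by simp⟩
  obtain ⟨a, ha, hmax⟩ := hv.exists_isMaxOn hne hC
  obtain ⟨M, hM, -⟩ := EReal.lt_iff_exists_real_btwn.1 (hvt a ha)
  exact ⟨M, fun z hz => (hmax hz).trans hM.le⟩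

set_option maxHeartbeats 2000000 in
theorem comp_sub {n : ℕ} {U : Set ℂ} (hU : IsOpen U) {f : ℂ → Fin n → ℂ}
    (hf : DifferentiableOn ℂ f U) {h : (Fin n → ℂ) → EReal} (hh : PlurisubharmonicOn h univ) :
    SubharmonicOn (fun z => h (f z)) U := by
  have hlt : ∀ x, h x < ⊤ := by
    intro x
    have := (hh.2 x 0).2.1 0 (mem_univ _)
    simpa using this
  refine ⟨usc_comp hh.1 hf.continuousOn (mapsTo_univ _ _), fun z _ => hlt _, ?_⟩
  intro c r hr hc H hH hb z1 hz1
  by_contra hcon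
  push Not at hcon
  obtain ⟨a, ha1, ha2⟩ := EReal.lt_iff_exists_real_btwn.1 hcon
  have ha1 : H z1 < a := by exact_mod_cast ha1
  set η := a - H z1 with hη
  have hηp : 0 < η := by linarith
  obtain ⟨δ, hδ, hδr⟩ : ∃ δ : ℝ, 0 < δ ∧ δ * r ^ 2 < η / 2 := by
    refine ⟨η / (4 * r ^ 2), by positivity, ?_⟩
    field_simp; norm_num
  have hfc : ContinuousOn f (closedBall c r) := hf.continuousOn.mono hc
  have hDc := isCompact_closedBall c r
  obtain ⟨R, hR⟩ := hDc.exists_bound_of_continuousOn hfc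
  have hxc : IsCompact (closedBall (0 : Fin n → ℂ) (R + 1)) := isCompact_closedBall _ _
  obtain ⟨M0, hM0⟩ := usc_bdd hxc (hh.1.mono (subset_univ _)) (fun z _ => hlt z)
  obtain ⟨m0, hm0⟩ := hDc.exists_bound_of_continuousOn hH.1
  set N : (Fin n → ℂ) × ℂ → ℝ := fun q => ∑ i, ‖q.1 i - f q.2 i‖ ^ 2 with hN
  have hfc2 : ContinuousOn (fun q : (Fin n → ℂ) × ℂ => f q.2)
      (closedBall (0 : Fin n → ℂ) (R + 1) ×ˢ closedBall c r) :=
    hfc.comp continuousOn_snd (fun q hq => hq.2)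
  have hHc2 : ContinuousOn (fun q : (Fin n → ℂ) × ℂ => H q.2)
      (closedBall (0 : Fin n → ℂ) (R + 1) ×ˢ closedBall c r) :=
    hH.1.comp continuousOn_snd (fun q hq => hq.2)
  have hNc : ContinuousOn N (closedBall (0 : Fin n → ℂ) (R + 1) ×ˢ closedBall c r) := by
    apply continuousOn_finsetSum
    intro i _
    have := (continuous_apply i).comp_continuousOn hfc2
    exact ((((continuous_apply i).comp continuous_fst).continuousOn).sub this).norm.pow 2
  have hhusc : UpperSemicontinuousOn (fun q : (Fin n → ℂ) × ℂ => h q.1)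
      (closedBall (0 : Fin n → ℂ) (R + 1) ×ˢ closedBall c r) :=
    usc_comp hh.1 continuousOn_fst (mapsTo_univ _ _)
  have hN0 : ∀ q, 0 ≤ N q := fun q => by positivity
  have hsub : closedBall (0 : Fin n → ℂ) (R + 1) ×ˢ sphere c r ⊆
      closedBall (0 : Fin n → ℂ) (R + 1) ×ˢ closedBall c r :=
    prod_mono le_rfl sphere_subset_closedBall
  -- the bad set on the boundary
  obtain ⟨ρ, hρ, hρS⟩ : ∃ ρ : ℝ, 0 < ρ ∧ ∀ q ∈ closedBall (0 : Fin n → ℂ) (R + 1) ×ˢ sphere c r,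
      ((η / 2 : ℝ) : EReal) ≤ h q.1 + ((- H q.2 : ℝ) : EReal) → ρ ≤ N q := by
    have husc := (usc_add_real hhusc hHc2.neg).mono hsub
    have hS := husc.isCompact_inter_preimage_Ici (hxc.prod (isCompact_sphere c r))
      ((η / 2 : ℝ) : EReal)
    rcases Set.eq_empty_or_nonempty ((closedBall (0 : Fin n → ℂ) (R + 1) ×ˢ sphere c r) ∩
      (fun q : (Fin n → ℂ) × ℂ => h q.1 + ((- H q.2 : ℝ) : EReal)) ⁻¹' Ici ((η / 2 : ℝ) : EReal))
      with he | hne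
    · refine ⟨1, one_pos, fun q hq hq2 => ?_⟩
      have : q ∈ (∅ : Set ((Fin n → ℂ) × ℂ)) := he ▸ ⟨hq, hq2⟩
      exact this.elim
    · obtain ⟨q0, hq0, hmin⟩ := hS.exists_isMinOn hne (hNc.mono (inter_subset_left.trans hsub))
      refine ⟨N q0, ?_, fun q hq hq2 => hmin ⟨hq, hq2⟩⟩
      apply lt_of_le_of_ne (hN0 _)
      intro h0
      have h1 : q0.1 = f q0.2 := by
        funext i
        have := (Finset.sum_eq_zero_iff_of_nonneg (fun i _ => by positivity)).1 h0.symm i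
          (Finset.mem_univ i)
        simpa [sub_eq_zero] using this
      have h2 : ((η / 2 : ℝ) : EReal) ≤ h q0.1 + ((- H q0.2 : ℝ) : EReal) := hq0.2
      have h3 := hb q0.2 hq0.1.2
      simp only [] at h3
      rw [h1] at h2
      generalize h (f q0.2) = y at *
      induction y with
      | bot => simp at h2
      | top => simp at h3
      | coe x => norm_cast at *; linarith
  set T := M0 + δ * r ^ 2 + m0 with hT
  obtain ⟨k, hk, hkT⟩ : ∃ k : ℝ, 0 < k ∧ T - η < k * min ρ 1 := by
    refine ⟨(|T - η| + 1) / min ρ 1, by positivity, ?_⟩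
    rw [div_mul_cancel₀ _ (by positivity)]
    linarith [le_abs_self (T - η)]
  have husc := usc_add_real (g := fun q : (Fin n → ℂ) × ℂ => δ * ‖q.2 - c‖ ^ 2 - H q.2 - k * N q)
    hhusc (((by fun_prop : Continuous fun q : (Fin n → ℂ) × ℂ => δ * ‖q.2 - c‖ ^ 2).continuousOn.sub
      hHc2).sub (continuousOn_const.mul hNc))
  have hz1c := ball_subset_closedBall hz1
  have hq1 : (f z1, z1) ∈ closedBall (0 : Fin n → ℂ) (R + 1) ×ˢ closedBall c r :=
    ⟨by simpa using (hR z1 hz1c).trans (by linarith), hz1c⟩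
  obtain ⟨⟨x0, z0⟩, hq0, hmax⟩ := husc.exists_isMaxOn ⟨_, hq1⟩ (hxc.prod hDc)
  have hm1 := hmax hq1
  have hx0c : x0 ∈ closedBall (0 : Fin n → ℂ) (R + 1) := hq0.1
  have hz0c : z0 ∈ closedBall c r := hq0.2
  simp only [mem_ofPred_eq] at hm1
  have hN1 : N (f z1, z1) = 0 := by simp [hN]
  rw [hN1] at hm1
  have hlow : ((η : ℝ) : EReal) < h x0 +
      ((δ * ‖z0 - c‖ ^ 2 - H z0 - k * N (x0, z0) : ℝ) : EReal) := by
    refine lt_of_lt_of_le ?_ hm1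
    have := hlt (f z1)
    generalize h (f z1) = y at *
    induction y with
    | bot => simp at ha2
    | top => simp at this
    | coe x =>
      norm_cast at *
      have : 0 ≤ δ * ‖z1 - c‖ ^ 2 := by positivity
      linarith
  obtain ⟨X, hX⟩ : ∃ x : ℝ, h x0 = x := by
    have := hlt x0
    generalize h x0 = y at *
    induction y with
    | bot => simp at hlow
    | top => simp at this
    | coe x => exact ⟨x, rfl⟩
  rw [hX] at hlow
  have hlow : η < X + (δ * ‖z0 - c‖ ^ 2 - H z0 - k * N (x0, z0)) := by exact_mod_cast hlow
  have hz0n : ‖z0 - c‖ ≤ r := by simpa [dist_eq_norm] using hz0c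
  have hzr : δ * ‖z0 - c‖ ^ 2 ≤ δ * r ^ 2 := by gcongr
  have hXM : X ≤ M0 := by have := hM0 x0 hx0c; rw [hX] at this; exact_mod_cast this
  have hHm : - m0 ≤ H z0 := by
    have := hm0 z0 hz0c; rw [Real.norm_eq_abs] at this; linarith [neg_abs_le (H z0)]
  have hNlt : N (x0, z0) < min ρ 1 := by
    have : k * N (x0, z0) < k * min ρ 1 := by linarith
    exact lt_of_mul_lt_mul_left this hk.le
  have hNρ : N (x0, z0) < ρ := hNlt.trans_le (min_le_left _ _)
  have hNone : N (x0, z0) < 1 := hNlt.trans_le (min_le_right _ _)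
  have hkN : 0 ≤ k * N (x0, z0) := mul_nonneg hk.le (hN0 _)
  have hz0b : z0 ∈ ball c r := by
    by_contra hnot
    have hsph : z0 ∈ sphere c r := by
      rw [← closedBall_sdiff_ball]; exact ⟨hz0c, hnot⟩
    have := hρS (x0, z0) ⟨hx0c, hsph⟩ (by
      simp only [hX]; norm_cast; linarith)
    linarith
  have hx0b : x0 ∈ ball (0 : Fin n → ℂ) (R + 1) := by
    rw [mem_ball_zero_iff]
    have : ‖x0 - f z0‖ < 1 := by
      rw [pi_norm_lt_iff one_pos]
      intro i
      have : ‖x0 i - f z0 i‖ ^ 2 ≤ N (x0, z0) :=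
        Finset.single_le_sum (f := fun i => ‖x0 i - f z0 i‖ ^ 2) (fun i _ => by positivity)
          (Finset.mem_univ i)
      rw [Pi.sub_apply]
      by_contra hge
      push Not at hge
      nlinarith
    have h2 := norm_add_le (x0 - f z0) (f z0)
    rw [sub_add_cancel] at h2
    linarith [hR z0 hz0c]
  have hz0U : z0 ∈ U := hc hz0c
  obtain ⟨b, g, hg, htay⟩ := taylor2 hU hf hz0U
  -- local bound for `g`
  have hgc : ContinuousAt g z0 := (hg.differentiableAt (hU.mem_nhds hz0U)).continuousAt
  have hev1 : ∀ᶠ w in 𝓝 (0:ℂ), ‖g (z0 + w)‖ ≤ ‖g z0‖ + 1 := by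
    have : ContinuousAt (fun w => ‖g (z0 + w)‖) 0 := by
      apply ContinuousAt.norm
      exact ContinuousAt.comp (x := (0:ℂ)) (f := fun w => z0 + w) (g := g) (by simpa using hgc)
        (by fun_prop)
    have h2 := this.eventually_lt (continuousAt_const (y := ‖g z0‖ + 1)) (by simp)
    exact h2.mono fun w hw => le_of_lt hw
  have hev2 : ∀ᶠ w in 𝓝 (0:ℂ), z0 + w ∈ ball c r := by
    have : ContinuousAt (fun w : ℂ => z0 + w) 0 := by fun_prop
    exact this.eventually (isOpen_ball.mem_nhds (by simpa using hz0b))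
  have hev3 : ∀ᶠ w in 𝓝 (0:ℂ), x0 + w • b ∈ ball (0 : Fin n → ℂ) (R + 1) := by
    have : ContinuousAt (fun w : ℂ => x0 + w • b) 0 := by fun_prop
    exact this.eventually (isOpen_ball.mem_nhds (by simpa using hx0b))
  set G := ‖g z0‖ + 1 with hG
  have hev4 : ∀ᶠ ε in 𝓝[>] (0:ℝ), k * (n * G ^ 2) * ε ^ 2 < δ := by
    have : ContinuousAt (fun ε : ℝ => k * (n * G ^ 2) * ε ^ 2) 0 := by fun_prop
    exact (this.eventually_lt continuousAt_const (by simpa using hδ)).filter_mono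
      nhdsWithin_le_nhds
  obtain ⟨ε, hε, hε4, hε0⟩ := ((eventually_small (hev1.and (hev2.and hev3))).and
    (hev4.and self_mem_nhdsWithin)).exists
  have hε0 : 0 < ε := hε0
  set d := fun i => x0 i - f z0 i with hd
  set m := X + (δ * ‖z0 - c‖ ^ 2 - H z0 - k * N (x0, z0)) with hm
  have hline := (hh.2 x0 b).2.2 0 ε hε0 (fun _ _ => mem_univ _)
    (fun w => (m + H (z0 + w) + k * (N (x0, z0) + n * G ^ 2 * ε ^ 4)
      - δ * (‖z0 - c‖ ^ 2 + ε ^ 2) + (- (2 * δ * (starRingEnd ℂ (z0 - c)) * w) -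
        2 * k * ∑ i, (starRingEnd ℂ (d i)) * (w ^ 2 * g (z0 + w) i)).re)) ?_ ?_ 0
      (mem_ball_self hε0)
  · simp only [zero_smul, add_zero, hX] at hline
    have hline := EReal.coe_le_coe_iff.1 hline
    simp at hline
    have h5 : k * (n * G ^ 2) * ε ^ 4 < δ * ε ^ 2 := by
      have := mul_lt_mul_of_pos_right hε4 (by positivity : 0 < ε ^ 2)
      calc _ = k * (n * G ^ 2) * ε ^ 2 * ε ^ 2 := by ring
        _ < _ := this
    nlinarith
  · have hball : closedBall z0 ε ⊆ closedBall c r := by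
      intro y hy
      have : y - z0 ∈ closedBall (0:ℂ) ε := by simpa [dist_eq_norm] using hy
      have := (hε this).2.1
      simp only [add_sub_cancel] at this
      exact ball_subset_closedBall this
    apply hm_add
    · apply hm_sub (hm_add (hm_add (hm_const _ _) (hm_shift (hm_mono hH hball))) (hm_const _ _))
        (hm_const _ _)
    · apply hm_re' _ hε0
      have hgd : DifferentiableOn ℂ (fun w => g (z0 + w)) (closedBall 0 ε) := by
        apply hg.comp (by fun_prop)
        intro w hw
        exact hc (ball_subset_closedBall (hε hw).2.1)
      have hgi : ∀ i, DifferentiableOn ℂ (fun w => g (z0 + w) i) (closedBall 0 ε) :=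
        fun i => (differentiableOn_pi.1 hgd) i
      apply DifferentiableOn.sub
      · fun_prop
      · apply DifferentiableOn.const_mul
        apply DifferentiableOn.fun_sum
        intro i _
        exact DifferentiableOn.const_mul (DifferentiableOn.mul (by fun_prop) (hgi i)) _
  · intro w hw
    have hwn : ‖w‖ = ε := by simpa using hw
    obtain ⟨hw1, hw2, hw3⟩ := hε (sphere_subset_closedBall hw)
    have hmx := hmax (show (x0 + w • b, z0 + w) ∈ _ from
      ⟨ball_subset_closedBall hw3, ball_subset_closedBall hw2⟩)
    simp only [mem_ofPred_eq, hX] at hmx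
    have hmx := le_of_add_le (m := m) (by exact_mod_cast hmx)
    refine hmx.trans (EReal.coe_le_coe_iff.2 ?_)
    have hNw : N (x0 + w • b, z0 + w) ≤ N (x0, z0) + n * G ^ 2 * ε ^ 4 -
        2 * (∑ i, (starRingEnd ℂ (d i)) * (w ^ 2 * g (z0 + w) i)).re := by
      rw [Complex.re_sum, Finset.mul_sum]
      have : (n : ℝ) * G ^ 2 * ε ^ 4 = ∑ i : Fin n, G ^ 2 * ε ^ 4 := by
        simp; ring
      rw [this]
      simp only [hN]
      rw [← Finset.sum_add_distrib, ← Finset.sum_sub_distrib]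
      apply Finset.sum_le_sum
      intro i _
      have hfi : f (z0 + w) i = f z0 i + w * b i + w ^ 2 * g (z0 + w) i := by
        rw [htay w]; simp
      have hdi : (x0 + w • b) i - f (z0 + w) i = d i - w ^ 2 * g (z0 + w) i := by
        rw [hfi]; simp [hd]; ring
      rw [hdi]
      have hgi : ‖w ^ 2 * g (z0 + w) i‖ ^ 2 ≤ G ^ 2 * ε ^ 4 := by
        rw [norm_mul, norm_pow, hwn, mul_pow]
        have h1 : ‖g (z0 + w) i‖ ≤ G := (norm_le_pi_norm _ i).trans hw1
        have : ‖g (z0 + w) i‖ ^ 2 ≤ G ^ 2 := by gcongr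
        nlinarith [pow_pos hε0 4]
      have hexp : ∀ p q : ℂ, ‖p - q‖ ^ 2 = ‖p‖ ^ 2 + ‖q‖ ^ 2 - 2 * (starRingEnd ℂ p * q).re := by
        intro p q
        simp only [Complex.sq_norm, Complex.normSq_apply]
        simp
        ring
      rw [hexp]
      linarith
    have hsq : ‖z0 + w - c‖ ^ 2 = ‖z0 - c‖ ^ 2 + ε ^ 2 +
        2 * ((starRingEnd ℂ (z0 - c)) * w).re := by
      rw [sq_sphere (p := c) (z0 := z0) (ρ := ε) (w := z0 + w) (by simpa using hw)]
      simp
    have hre : (- (2 * δ * (starRingEnd ℂ (z0 - c)) * w) -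
        2 * k * ∑ i, (starRingEnd ℂ (d i)) * (w ^ 2 * g (z0 + w) i)).re =
        - (2 * δ * ((starRingEnd ℂ (z0 - c)) * w).re) -
        2 * k * (∑ i, (starRingEnd ℂ (d i)) * (w ^ 2 * g (z0 + w) i)).re := by
      have e1 : ∀ (t : ℝ) (z : ℂ), (2 * (t:ℂ) * z).re = 2 * t * z.re := by
        intro t z
        rw [show (2 * (t:ℂ) * z) = ((2 * t : ℝ) : ℂ) * z by push_cast; ring, Complex.re_ofReal_mul]
      rw [Complex.sub_re, Complex.neg_re, mul_assoc (2 * (δ:ℂ)), e1, e1]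
    have := mul_le_mul_of_nonneg_left hNw hk.le
    rw [hre, hsq]
    linarith

theorem dirichlet_span (c : ℂ) {r : ℝ} (hr : 0 < r) (g : C(AddCircle (2 * Real.pi), ℂ))
    (hg : g ∈ Submodule.span ℂ (range (@fourier (2 * Real.pi)))) :
    ∃ p q : ℂ → ℂ, Differentiable ℂ p ∧ Differentiable ℂ q ∧
      ∀ θ : ℝ, g (θ : AddCircle (2 * Real.pi)) = p (circleMap c r θ) +
        starRingEnd ℂ (q (circleMap c r θ)) := by
  have hrc : (r : ℂ) ≠ 0 := by exact_mod_cast hr.ne'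
  have hcm : ∀ θ : ℝ, (circleMap c r θ - c) / r = Complex.exp (θ * Complex.I) := by
    intro θ; simp [circleMap, hrc]
  induction hg using Submodule.span_induction with
  | mem x hx =>
    obtain ⟨n, rfl⟩ := hx
    have hf : ∀ θ : ℝ, fourier n (θ : AddCircle (2 * Real.pi)) = Complex.exp (n * (θ * Complex.I)) := by
      intro θ
      rw [fourier_coe_apply]
      congr 1
      push_cast
      field_simp
    rcases Int.eq_nat_or_neg n with ⟨m, rfl | rfl⟩
    · refine ⟨fun z => ((z - c) / r) ^ m, fun _ => 0, by fun_prop, by fun_prop, fun θ => ?_⟩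
      rw [hf]
      simp only [hcm, map_zero, add_zero, ← Complex.exp_nat_mul]
      simp
    · refine ⟨fun _ => 0, fun z => ((z - c) / r) ^ m, by fun_prop, by fun_prop, fun θ => ?_⟩
      rw [hf]
      simp only [hcm, zero_add, ← Complex.exp_nat_mul, ← Complex.exp_conj]
      congr 1
      simp
  | zero => exact ⟨fun _ => 0, fun _ => 0, by fun_prop, by fun_prop, by simp⟩
  | add x y _ _ hx hy =>
    obtain ⟨p, q, hp, hq, h⟩ := hx
    obtain ⟨p', q', hp', hq', h'⟩ := hy
    refine ⟨fun z => p z + p' z, fun z => q z + q' z, by fun_prop, by fun_prop, fun θ => ?_⟩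
    simp [h, h']; ring
  | smul a x _ hx =>
    obtain ⟨p, q, hp, hq, h⟩ := hx
    refine ⟨fun z => a * p z, fun z => starRingEnd ℂ a * q z, by fun_prop, ?_, fun θ => ?_⟩
    · exact hq.const_mul _
    simp [h]; ring

theorem dirichlet (c : ℂ) {r : ℝ} (hr : 0 < r) {φ : ℂ → ℝ} (hφ : ContinuousOn φ (sphere c r))
    {ε : ℝ} (hε : 0 < ε) :
    ∃ F : ℂ → ℂ, Differentiable ℂ F ∧ ∀ z ∈ sphere c r, |(F z).re - φ z| < ε := by
  have : Fact (0 < 2 * Real.pi) := ⟨Real.two_pi_pos⟩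
  have hcont : Continuous (fun θ : ℝ => ((φ (circleMap c r θ) : ℝ) : ℂ)) := by
    apply Complex.continuous_ofReal.comp
    exact hφ.comp_continuous (continuous_circleMap c r) (fun θ => circleMap_mem_sphere c hr.le θ)
  have hper : Function.Periodic (fun θ : ℝ => ((φ (circleMap c r θ) : ℝ) : ℂ)) (2 * Real.pi) := by
    intro θ
    simp [periodic_circleMap c r θ]
  let ψ : C(AddCircle (2 * Real.pi), ℂ) := ⟨hper.lift, by
    exact continuous_coinduced_dom.2 hcont⟩
  have hmem : ψ ∈ (Submodule.span ℂ (range (@fourier (2 * Real.pi)))).topologicalClosure := by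
    rw [span_fourier_closure_eq_top]; trivial
  have hmem : ψ ∈ closure ((Submodule.span ℂ (range (@fourier (2 * Real.pi))) :
      Set C(AddCircle (2 * Real.pi), ℂ))) := hmem
  obtain ⟨g, hg, hd⟩ := Metric.mem_closure_iff.1 hmem ε hε
  obtain ⟨p, q, hp, hq, h⟩ := dirichlet_span c hr g hg
  refine ⟨fun z => p z + q z, by fun_prop, fun z hz => ?_⟩
  obtain ⟨θ, rfl⟩ : ∃ θ, circleMap c r θ = z := by
    have : z ∈ range (circleMap c r) := by rw [range_circleMap, abs_of_pos hr]; exact hz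
    exact this
  have h1 : dist (ψ (θ : AddCircle (2 * Real.pi))) (g (θ : AddCircle (2 * Real.pi))) < ε :=
    (ContinuousMap.dist_apply_le_dist _).trans_lt hd
  have h2 : ψ (θ : AddCircle (2 * Real.pi)) = ((φ (circleMap c r θ) : ℝ) : ℂ) := rfl
  rw [h2, h, dist_comm, dist_eq_norm] at h1
  have h3 := (Complex.abs_re_le_norm _).trans_lt h1
  simpa using h3

/-- one sided version -/
theorem dirichlet_above (c : ℂ) {r : ℝ} (hr : 0 < r) {φ : ℂ → ℝ}
    (hφ : ContinuousOn φ (sphere c r)) {ε : ℝ} (hε : 0 < ε) :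
    ∃ F : ℂ → ℂ, Differentiable ℂ F ∧ ∀ z ∈ sphere c r, φ z < (F z).re ∧ (F z).re < φ z + ε := by
  obtain ⟨F, hF, h⟩ := dirichlet c hr hφ (half_pos hε)
  refine ⟨fun z => F z + ((ε / 2 : ℝ) : ℂ), by fun_prop, fun z hz => ?_⟩
  have := abs_lt.1 (h z hz)
  rw [Complex.add_re, Complex.ofReal_re]
  constructor <;> linarith

theorem subAt_add {u v : ℂ → EReal} {z0 : ℂ} {V : Set ℂ} (hV : V ∈ 𝓝 z0)
    (hu : UpperSemicontinuousOn u V) (hv : UpperSemicontinuousOn v V)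
    (hut : ∀ z ∈ V, u z < ⊤) (hvt : ∀ z ∈ V, v z < ⊤) (hus : SubAt u z0) (hvs : SubAt v z0) :
    SubAt (fun z => u z + v z) z0 := by
  filter_upwards [hus, hvs, eventually_small hV, self_mem_nhdsWithin] with ρ h1 h2 h3 hρ K hK hb
  have hρ : 0 < ρ := hρ
  have hsV : sphere z0 ρ ⊆ V := sphere_subset_closedBall.trans h3
  have hKc : ContinuousOn K (sphere z0 ρ) := hK.1.mono sphere_subset_closedBall
  suffices ∀ ε : ℝ, 0 < ε → u z0 + v z0 ≤ ((K z0 + ε : ℝ) : EReal) by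
    have ht := hut z0 (mem_of_mem_nhds hV)
    have ht' := hvt z0 (mem_of_mem_nhds hV)
    generalize u z0 + v z0 = y at *
    induction y with
    | bot => simp
    | top => have := this 1 one_pos; simp only [top_le_iff] at this; exact absurd this (EReal.coe_ne_top _)
    | coe x =>
      norm_cast at *
      refine le_of_forall_pos_le_add fun ε hε => ?_
      have := this ε hε
      exact_mod_cast this
  intro ε hε
  -- continuous selection
  obtain ⟨s, hs⟩ := exists_continuous_forall_mem_convex_of_local_const (X := sphere z0 ρ)
    (E := ℝ × ℝ)
    (t := fun x => {p : ℝ × ℝ | u x < (p.1 : EReal) ∧ v x < (p.2 : EReal) ∧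
      p.1 + p.2 < K x + ε / 3}) (by
      intro x
      have : {p : ℝ × ℝ | u x < (p.1 : EReal) ∧ v x < (p.2 : EReal) ∧
          p.1 + p.2 < K x + ε / 3} = ({p : ℝ × ℝ | u x < (p.1 : EReal)} ∩
          {p : ℝ × ℝ | v x < (p.2 : EReal)}) ∩ {p : ℝ × ℝ | p.1 + p.2 < K x + ε / 3} := by
        ext p; simp [and_assoc]
      rw [this]
      have haux : ∀ b : EReal, Convex ℝ {t : ℝ | b < (t : EReal)} := by
        intro b
        apply Set.OrdConnected.convex
        refine ⟨fun x hx y hy z hz => ?_⟩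
        have hx' : b < (x : EReal) := hx
        exact lt_of_lt_of_le hx' (EReal.coe_le_coe_iff.2 hz.1)
      refine ((((haux (u x)).linear_preimage (LinearMap.fst ℝ ℝ ℝ))).inter
        ((haux (v x)).linear_preimage (LinearMap.snd ℝ ℝ ℝ))).inter ?_
      exact (convex_Iio (K x + ε / 3)).linear_preimage (LinearMap.fst ℝ ℝ ℝ + LinearMap.snd ℝ ℝ ℝ))
    (by
      intro x
      have hxu := hut x (hsV x.2)
      have hxv := hvt x (hsV x.2)
      have hbx := hb x x.2
      obtain ⟨a1, a2, ha1, ha2, ha⟩ : ∃ a1 a2 : ℝ, u x < (a1 : EReal) ∧ v x < (a2 : EReal) ∧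
          a1 + a2 < K x + ε / 3 := by
        generalize u x = y1 at *
        generalize v x = y2 at *
        induction y1 with
        | top => simp at hxu
        | bot =>
          obtain ⟨a2, h, -⟩ := EReal.lt_iff_exists_real_btwn.1 hxv
          exact ⟨K x - a2, a2, EReal.bot_lt_coe _, h, by linarith⟩
        | coe y1 =>
          induction y2 with
          | top => simp at hxv
          | bot => exact ⟨y1 + 1, K x - y1 - 1, by exact_mod_cast lt_add_one y1,
              EReal.bot_lt_coe _, by linarith⟩
          | coe y2 =>
            norm_cast at hbx
            exact ⟨y1 + ε / 9, y2 + ε / 9, by norm_cast; linarith, by norm_cast; linarith,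
              by linarith⟩
      refine ⟨(a1, a2), ?_⟩
      have e1 := (upperSemicontinuousWithinAt_iff.1
        ((hu.mono hsV) x x.2)) _ ha1
      have e2 := (upperSemicontinuousWithinAt_iff.1
        ((hv.mono hsV) x x.2)) _ ha2
      have e3 := (hKc.domRestrict.continuousAt (x := x)).eventually
        (lt_mem_nhds (show a1 + a2 - ε / 3 < K x by linarith))
      rw [eventually_nhds_subtype_iff _ _ (fun y => u y < (a1 : EReal)) |>.symm] at e1
      rw [eventually_nhds_subtype_iff _ _ (fun y => v y < (a2 : EReal)) |>.symm] at e2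
      filter_upwards [e1, e2, e3] with y h1 h2 h3
      refine ⟨h1, h2, ?_⟩
      simp only [domRestrict_apply] at h3
      linarith)
  have hsel : ∀ (π : ℝ × ℝ → ℝ), Continuous π → ∃ φ : ℂ → ℝ, ContinuousOn φ (sphere z0 ρ) ∧
      ∀ x : sphere z0 ρ, φ x = π (s x) := by
    intro π hπ
    classical
    refine ⟨fun z => if h : z ∈ sphere z0 ρ then π (s ⟨z, h⟩) else 0, ?_, ?_⟩
    · rw [continuousOn_iff_continuous_domRestrict]
      convert hπ.comp s.continuous using 1
      funext x
      exact dif_pos x.2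
    · intro x
      exact dif_pos x.2
  obtain ⟨φ1, hφ1, hφ1s⟩ := hsel Prod.fst continuous_fst
  obtain ⟨φ2, hφ2, hφ2s⟩ := hsel Prod.snd continuous_snd
  obtain ⟨F1, hF1, hF1b⟩ := dirichlet_above z0 hρ hφ1 (show 0 < ε / 3 by linarith)
  obtain ⟨F2, hF2, hF2b⟩ := dirichlet_above z0 hρ hφ2 (show 0 < ε / 3 by linarith)
  have hm1 := hm_re' (c := z0) hF1.differentiableOn hρ
  have hm2 := hm_re' (c := z0) hF2.differentiableOn hρ
  have k1 := h1 _ hm1 (fun z hz => by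
    have := (hs ⟨z, hz⟩).1
    rw [← hφ1s ⟨z, hz⟩] at this
    exact this.le.trans (by exact_mod_cast (hF1b z hz).1.le))
  have k2 := h2 _ hm2 (fun z hz => by
    have := (hs ⟨z, hz⟩).2.1
    rw [← hφ2s ⟨z, hz⟩] at this
    exact this.le.trans (by exact_mod_cast (hF2b z hz).1.le))
  have k3 := hm_le hρ (hm_add hm1 hm2) (hm_add hK (hm_const ε _)) (fun z hz => by
    have := (hs ⟨z, hz⟩).2.2
    rw [← hφ2s ⟨z, hz⟩, ← hφ1s ⟨z, hz⟩] at this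
    have := (hF2b z hz).2
    have := (hF1b z hz).2
    simp only at *
    linarith)
  refine (add_le_add k1 k2).trans ?_
  exact_mod_cast k3

theorem poisson_kernel (c : ℂ) {r : ℝ} (hr : 0 < r) {ζ : ℂ} (hζ : ζ ∈ sphere c r)
    {ε τ : ℝ} (hε : 0 < ε) (hτ : 0 < τ) :
    ∃ (F : ℂ → ℂ) (B : ℝ), 1 ≤ B ∧ DifferentiableOn ℂ F (closedBall c r) ∧
      (∀ z ∈ closedBall c r, 0 ≤ (F z).re ∧ (F z).re ≤ B) ∧ (F c).re = 1 ∧ (F ζ).re = B ∧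
      ∀ z ∈ sphere c r, τ ≤ ‖z - ζ‖ → (F z).re ≤ ε := by
  have hζn : ‖ζ - c‖ = r := by simpa [dist_eq_norm] using hζ
  have hζ0 : ζ - c ≠ 0 := by rw [← norm_pos_iff, hζn]; exact hr
  set t := τ / r with ht
  have htp : 0 < t := by positivity
  obtain ⟨κ, hκ0, hκ1, hκ2, hκ3⟩ : ∃ κ : ℝ, 0 < κ ∧ κ ≤ 1 / 2 ∧ κ ≤ t / 2 ∧ κ ≤ ε * t ^ 2 / 8 := by
    refine ⟨min (1 / 2) (min (t / 2) (ε * t ^ 2 / 8)), by positivity, min_le_left _ _,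
      (min_le_right _ _).trans (min_le_left _ _), (min_le_right _ _).trans (min_le_right _ _)⟩
  set s : ℝ := 1 - κ with hs
  have hs0 : 0 < s := by linarith
  have hωle : ∀ z ∈ closedBall c r, ‖(z - c) / (ζ - c)‖ ≤ 1 := by
    intro z hz
    rw [norm_div, hζn, div_le_one hr]
    simpa [dist_eq_norm] using hz
  have hsω : ∀ z ∈ closedBall c r, ‖(s : ℂ) * ((z - c) / (ζ - c))‖ ≤ s := by
    intro z hz
    rw [norm_mul, Complex.norm_real, Real.norm_of_nonneg hs0.le]
    nlinarith [hωle z hz]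
  have hden : ∀ z ∈ closedBall c r, κ ≤ ‖1 - (s : ℂ) * ((z - c) / (ζ - c))‖ := by
    intro z hz
    have := norm_sub_norm_le (1:ℂ) ((s : ℂ) * ((z - c) / (ζ - c)))
    rw [norm_one] at this
    linarith [hsω z hz]
  have hre : ∀ q : ℂ, ‖1 - q‖ ≠ 0 → ((1 + q) / (1 - q)).re = (1 - ‖q‖ ^ 2) / ‖1 - q‖ ^ 2 := by
    intro q hq
    rw [Complex.div_re, Complex.sq_norm, Complex.sq_norm]
    rw [← add_div]
    congr 1
    simp [Complex.normSq_apply]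
    ring
  have hreF := fun z (hz : z ∈ closedBall c r) => hre ((s : ℂ) * ((z - c) / (ζ - c)))
    (by linarith [hden z hz])
  refine ⟨fun z => (1 + (s : ℂ) * ((z - c) / (ζ - c))) / (1 - (s : ℂ) * ((z - c) / (ζ - c))),
    (1 + s) / (1 - s), ?_, ?_, ?_, ?_, ?_, ?_⟩
  · rw [le_div_iff₀ (by linarith)]; linarith
  · intro z hz
    have : (1 - (s : ℂ) * ((z - c) / (ζ - c))) ≠ 0 := by
      rw [← norm_pos_iff]; linarith [hden z hz]
    apply DifferentiableAt.differentiableWithinAt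
    exact DifferentiableAt.fun_div (by fun_prop) (by fun_prop) this
  · intro z hz
    constructor
    · rw [hreF z hz]
      apply div_nonneg _ (by positivity)
      nlinarith [hsω z hz, norm_nonneg ((s : ℂ) * ((z - c) / (ζ - c)))]
    · refine (Complex.re_le_norm _).trans ?_
      rw [norm_div]
      have h1 := norm_add_le (1:ℂ) ((s : ℂ) * ((z - c) / (ζ - c)))
      rw [norm_one] at h1
      have h2 := hsω z hz
      have h3 := hden z hz
      rw [show (1 : ℝ) - s = κ by simp [hs]]
      gcongr
      linarith
  · simp
  · simp only [div_self hζ0, mul_one]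
    rw [← Complex.ofReal_one, ← Complex.ofReal_add, ← Complex.ofReal_sub, ← Complex.ofReal_div,
      Complex.ofReal_re]
  · intro z hz hzτ
    have hzc := sphere_subset_closedBall hz
    have hzn : ‖z - c‖ = r := by simpa [dist_eq_norm] using hz
    have hω1 : ‖(z - c) / (ζ - c)‖ = 1 := by rw [norm_div, hzn, hζn, div_self hr.ne']
    have hd : t ≤ ‖1 - (z - c) / (ζ - c)‖ := by
      have : 1 - (z - c) / (ζ - c) = (ζ - z) / (ζ - c) := by field_simp; ring
      rw [this, norm_div, hζn, ht, norm_sub_rev]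
      gcongr
    have hq : t / 2 ≤ ‖1 - (s : ℂ) * ((z - c) / (ζ - c))‖ := by
      have h1 : 1 - (z - c) / (ζ - c) = (1 - (s : ℂ) * ((z - c) / (ζ - c))) -
          (κ : ℂ) * ((z - c) / (ζ - c)) := by simp [hs]; ring
      have h2 := norm_sub_le (1 - (s : ℂ) * ((z - c) / (ζ - c))) ((κ : ℂ) * ((z - c) / (ζ - c)))
      rw [← h1, norm_mul, hω1, Complex.norm_real, Real.norm_of_nonneg hκ0.le] at h2
      linarith
    rw [hreF z hzc, norm_mul, hω1, Complex.norm_real, Real.norm_of_nonneg hs0.le, mul_one]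
    rw [div_le_iff₀ (pow_pos (by linarith) 2)]
    have h3 : (t / 2) ^ 2 ≤ ‖1 - (s : ℂ) * ((z - c) / (ζ - c))‖ ^ 2 := by gcongr
    have h4 := mul_le_mul_of_nonneg_left h3 hε.le
    rw [hs]
    nlinarith

theorem bot_of_arc {V : Set ℂ} {u : ℂ → EReal} (hu : SubharmonicOn u V) {c : ℂ} {r : ℝ}
    (hr : 0 < r) (hc : closedBall c r ⊆ V) {ζ : ℂ} (hζ : ζ ∈ sphere c r) {τ : ℝ} (hτ : 0 < τ)
    (hb : ∀ z ∈ sphere c r, ‖z - ζ‖ < τ → u z = ⊥) : u c = ⊥ := by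
  obtain ⟨M, hM⟩ := usc_bdd (isCompact_closedBall c r) (hu.1.mono hc) (fun z hz => hu.2.1 z (hc hz))
  obtain ⟨F, B, -, hF, -, hF1, -, hF2⟩ := poisson_kernel c hr hζ (ε := 1 / 2) (by norm_num) hτ
  rw [EReal.eq_bot_iff_forall_lt]
  intro y
  set N := 2 * (|M - y| + 1) with hN
  have hN0 : 0 ≤ N := by positivity
  have := hu.2.2 c r hr hc (fun z => (M + N / 2) - N * (F z).re)
    (hm_sub (hm_const _ _) (hm_smul _ (hm_re' hF hr))) ?_ c (mem_ball_self hr)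
  · refine this.trans_lt ?_
    rw [hF1]
    norm_cast
    linarith [le_abs_self (M - y)]
  · intro z hz
    by_cases h : ‖z - ζ‖ < τ
    · rw [hb z hz h]; exact bot_le
    · push Not at h
      refine (hM z (sphere_subset_closedBall hz)).trans ?_
      norm_cast
      have := hF2 z hz h
      nlinarith

theorem dense_ne_bot {U : Set ℂ} (hU : IsOpen U) (hUc : IsPreconnected U) {u : ℂ → EReal}
    (hu : SubharmonicOn u U) {z1 : ℂ} (hz1 : z1 ∈ U) (hne : u z1 ≠ ⊥) {W : Set ℂ} (hW : IsOpen W)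
    (hWn : (W ∩ U).Nonempty) : ∃ z ∈ W, u z ≠ ⊥ := by
  by_contra hcon
  push Not at hcon
  have hsub : U ⊆ interior {z | u z = ⊥} := by
    apply hUc.subset_of_closure_inter_subset isOpen_interior
    · obtain ⟨z, hzW, hzU⟩ := hWn
      exact ⟨z, hzU, mem_interior.2 ⟨W, fun z hz => hcon z hz, hW, hzW⟩⟩
    · rintro p ⟨hp, hpU⟩
      obtain ⟨ρ, hρ, hρU⟩ := Metric.isOpen_iff.1 hU p hpU
      obtain ⟨q, hq, hqp⟩ := Metric.mem_closure_iff.1 hp (ρ / 4) (by linarith)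
      obtain ⟨τ, hτ, hτb⟩ := Metric.isOpen_iff.1 isOpen_interior q hq
      refine mem_interior.2 ⟨ball p (ρ / 4), fun z hz => ?_, isOpen_ball,
        mem_ball_self (by linarith)⟩
      by_cases hzq : z = q
      · rw [hzq]; exact interior_subset hq
      have hd : 0 < dist q z := dist_pos.2 (Ne.symm hzq)
      refine bot_of_arc hu hd ?_ (ζ := q) (mem_sphere.2 rfl) hτ ?_
      · intro y hy
        apply hρU
        rw [mem_ball] at *
        rw [mem_closedBall] at hy
        have h1 := dist_triangle y z p
        have h2 := dist_triangle q p z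
        rw [dist_comm q p, dist_comm p z] at h2
        linarith
      · intro y hy hyq
        have h : y ∈ {z | u z = ⊥} := interior_subset (hτb (by simpa [dist_eq_norm] using hyq))
        exact h
  have h : z1 ∈ {z | u z = ⊥} := interior_subset (hsub hz1)
  exact hne h

theorem hm_max {A K : ℂ → ℝ} {c : ℂ} {R : ℝ} (hA : HarmonicMVP A (closedBall c R))
    (hK : HarmonicMVP K (closedBall c R)) (h : ∀ x ∈ sphere c R, A x ≤ K x) :
    ∀ z ∈ closedBall c R, A z ≤ K z := by
  have key : ∀ z ∈ ball c R, ∀ᶠ ρ in 𝓝[>] (0:ℝ), closedBall z ρ ⊆ closedBall c R := by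
    intro z hz
    filter_upwards [eventually_small (isOpen_ball.mem_nhds hz)] with ρ hρ
    exact hρ.trans ball_subset_closedBall
  have := domination (isCompact_closedBall c R) isOpen_ball ball_subset_closedBall
    (v := fun z => (A z : EReal)) (K := K)
    (continuous_coe_real_ereal.comp_continuousOn hA.1).upperSemicontinuousOn
    (fun z _ => EReal.coe_lt_top _) hK.1 ?_ ?_ ?_
  · intro z hz; exact_mod_cast this z hz
  · intro z hz
    filter_upwards [key z hz, self_mem_nhdsWithin] with ρ hρ hρ0 K hK hb
    exact_mod_cast hm_le hρ0 (hm_mono hA hρ) hK (fun w hw => by exact_mod_cast hb w hw)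
  · intro z hz
    filter_upwards [key z hz] with ρ hρ
    exact hm_mono hK hρ
  · intro z hz
    rw [closedBall_sdiff_ball] at hz
    exact_mod_cast h z hz

/-- the family of harmonic majorants used for Poisson modification -/
def PF (u : ℂ → EReal) (c : ℂ) (R : ℝ) : Set (ℂ → ℂ) :=
  {F | DifferentiableOn ℂ F (closedBall c R) ∧ (∀ z ∈ closedBall c R, (F z).re < 1) ∧
    ∀ z ∈ sphere c R, u z ≤ ((F z).re : EReal)}

open Classical in
/-- Poisson modification -/
noncomputable def PM (u : ℂ → EReal) (c : ℂ) (R : ℝ) (z : ℂ) : EReal :=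
  if z ∈ ball c R then ⨅ F ∈ PF u c R, ((F z).re : EReal) else u z

theorem pf_cont {u : ℂ → EReal} {c : ℂ} {R : ℝ} {F : ℂ → ℂ} (hF : F ∈ PF u c R) :
    ContinuousOn (fun z => (F z).re) (closedBall c R) :=
  Complex.continuous_re.comp_continuousOn hF.1.continuousOn

theorem pf_dir {u : ℂ → EReal} {c : ℂ} {R : ℝ} (hR : 0 < R) {F1 F2 : ℂ → ℂ}
    (h1 : F1 ∈ PF u c R) (h2 : F2 ∈ PF u c R) {ε : ℝ} (hε : 0 < ε) :
    ∃ F3 ∈ PF u c R, ∀ z ∈ closedBall c R,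
      (F3 z).re ≤ (F1 z).re + ε ∧ (F3 z).re ≤ (F2 z).re + ε := by
  obtain ⟨x, hx, hxm⟩ := (isCompact_closedBall c R).exists_isMaxOn
    ⟨c, mem_closedBall_self hR.le⟩ (pf_cont h1)
  have hm1 := h1.2.1 x hx
  set m := (F1 x).re with hm
  have hδ : 0 < min ε ((1 - m) / 2) := lt_min hε (by linarith)
  obtain ⟨F, hF, hFb⟩ := dirichlet_above c hR (φ := fun z => min (F1 z).re (F2 z).re)
    (((pf_cont h1).mono sphere_subset_closedBall).inf
      ((pf_cont h2).mono sphere_subset_closedBall)) hδ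
  have hFd : DifferentiableOn ℂ F (closedBall c R) := hF.differentiableOn
  have hFh := hm_re' hFd hR
  have e1 := min_le_left ε ((1 - m) / 2)
  have e2 := min_le_right ε ((1 - m) / 2)
  have k1 := hm_max hFh (hm_add (hm_re' h1.1 hR) (hm_const (min ε ((1 - m) / 2)) _)) (fun z hz => by
    linarith [(hFb z hz).2, min_le_left (F1 z).re (F2 z).re])
  have k2 := hm_max hFh (hm_add (hm_re' h2.1 hR) (hm_const (min ε ((1 - m) / 2)) _)) (fun z hz => by
    linarith [(hFb z hz).2, min_le_right (F1 z).re (F2 z).re])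
  refine ⟨F, ⟨hFd, fun z hz => ?_, fun z hz => ?_⟩, fun z hz => ⟨?_, ?_⟩⟩
  · have := k1 z hz
    have h3 : (F1 z).re ≤ m := hxm hz
    linarith
  · have a1 := h1.2.2 z hz
    have a2 := h2.2.2 z hz
    have : u z ≤ ((min (F1 z).re (F2 z).re : ℝ) : EReal) := by
      rcases le_total (F1 z).re (F2 z).re with h | h
      · rwa [min_eq_left h]
      · rwa [min_eq_right h]
    refine this.trans ?_
    exact_mod_cast (hFb z hz).1.le
  · have := k1 z hz
    linarith
  · have := k2 z hz
    linarith

theorem pm_le {u : ℂ → EReal} {c : ℂ} {R : ℝ} {F : ℂ → ℂ} (hF : F ∈ PF u c R) {z : ℂ}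
    (hz : z ∈ ball c R) : PM u c R z ≤ ((F z).re : EReal) := by
  unfold PM
  rw [if_pos hz]
  exact iInf₂_le F hF

theorem pf_lt {u : ℂ → EReal} {c : ℂ} {R : ℝ} {z : ℂ}
    (hz : z ∈ ball c R) {y : EReal} (h : PM u c R z < y) :
    ∃ F ∈ PF u c R, ((F z).re : EReal) < y := by
  unfold PM at h
  rw [if_pos hz] at h
  simpa [iInf_lt_iff] using h

theorem pm_off (u : ℂ → EReal) {c : ℂ} {R : ℝ} {z : ℂ} (hz : z ∉ ball c R) :
    PM u c R z = u z := by
  unfold PM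
  rw [if_neg hz]

theorem poisson_mod {V : Set ℂ} (hV : IsOpen V) {u : ℂ → EReal} (hu : SubharmonicOn u V)
    (hu0 : ∀ z ∈ V, u z ≤ 0) {c : ℂ} {R : ℝ} (hR : 0 < R) (hc : closedBall c R ⊆ V)
    (hcb : u c ≠ ⊥) :
    ∃ u' : ℂ → EReal, SubharmonicOn u' V ∧ (∀ z ∈ V, u' z ≤ 0) ∧ (∀ z ∈ V, u z ≤ u' z) ∧
      (∀ z, z ∉ ball c R → u' z = u z) ∧
      ∃ N : ℝ, ∀ z ∈ closedBall c (R / 2), ((-N : ℝ) : EReal) ≤ u' z := by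
  have hzero : (fun _ => 0 : ℂ → ℂ) ∈ PF u c R := by
    refine ⟨differentiableOn_const _, fun z _ => by simp, fun z hz => ?_⟩
    simpa using hu0 z (hc (sphere_subset_closedBall hz))
  have h0 : ∀ z ∈ V, PM u c R z ≤ 0 := by
    intro z hz
    by_cases h : z ∈ ball c R
    · simpa using pm_le hzero h
    · rw [pm_off u h]; exact hu0 z hz
  have hmaj : ∀ F ∈ PF u c R, ∀ z ∈ ball c R, u z ≤ ((F z).re : EReal) := fun F hF =>
    hu.2.2 c R hR hc (fun z => (F z).re) (hm_re' hF.1 hR) hF.2.2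
  have hge : ∀ z, u z ≤ PM u c R z := by
    intro z
    by_cases h : z ∈ ball c R
    · unfold PM
      rw [if_pos h]
      exact le_iInf₂ fun F hF => hmaj F hF z h
    · rw [pm_off u h]
  refine ⟨PM u c R, sub_of_subAt ?_ (fun z hz => (h0 z hz).trans_lt (by simp)) ?_, h0,
    fun z _ => hge z, fun z hz => pm_off u hz, ?_⟩
  · -- upper semicontinuity
    intro ζ hζ y hy
    by_cases hb : ζ ∈ ball c R
    · obtain ⟨F, hF, hFy⟩ := pf_lt hb hy
      have hcont : ContinuousAt (fun z => ((F z).re : EReal)) ζ :=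
        continuous_coe_real_ereal.continuousAt.comp
          ((pf_cont hF).continuousAt (mem_of_superset (isOpen_ball.mem_nhds hb)
            ball_subset_closedBall))
      apply mem_nhdsWithin_of_mem_nhds
      filter_upwards [isOpen_ball.mem_nhds hb, hcont.eventually_lt_const hFy] with w hw hw2
      exact (pm_le hF hw).trans_lt hw2
    rw [pm_off u hb] at hy
    by_cases hy0 : 0 < y
    · filter_upwards [self_mem_nhdsWithin] with w hw
      exact (h0 w hw).trans_lt hy0
    push Not at hy0
    obtain ⟨a, ha1, ha2⟩ := EReal.lt_iff_exists_real_btwn.1 hy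
    obtain ⟨b, hb1, hb2⟩ := EReal.lt_iff_exists_real_btwn.1 ha2
    have ha0 : a < 0 := by exact_mod_cast ha2.trans_le hy0
    have hab : a < b := by exact_mod_cast hb1
    have hua : ∀ᶠ w in 𝓝 ζ, u w < a := by
      have := hu.1 ζ hζ a ha1
      rwa [hV.nhdsWithin_eq hζ] at this
    apply mem_nhdsWithin_of_mem_nhds
    by_cases hsp : ζ ∈ closedBall c R
    · have hsp' : ζ ∈ sphere c R := by
        rw [← closedBall_sdiff_ball]; exact ⟨hsp, hb⟩
      obtain ⟨τ, hτ, hτb⟩ := Metric.eventually_nhds_iff.1 hua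
      obtain ⟨η, hη0, hη1, hη2⟩ : ∃ η : ℝ, 0 < η ∧ η < 1 ∧ a + η < b := by
        refine ⟨min (1 / 2) ((b - a) / 2), lt_min (by norm_num) (by linarith), ?_, ?_⟩
        · exact (min_le_left _ _).trans_lt (by norm_num)
        · linarith [min_le_right (1 / 2) ((b - a) / 2)]
      obtain ⟨P, B, hB, hP, hPb, -, hPζ, hPo⟩ := poisson_kernel c hR hsp'
        (ε := η / (-a)) (div_pos hη0 (by linarith)) hτ
      have hB0 : 0 < B := by linarith
      have hre : ∀ z, (((a / B : ℝ) : ℂ) * P z + (η : ℂ)).re = a * ((P z).re / B) + η := by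
        intro z
        rw [Complex.add_re, Complex.re_ofReal_mul, Complex.ofReal_re]
        ring
      have hH : (fun z => ((a / B : ℝ) : ℂ) * P z + (η : ℂ)) ∈ PF u c R := by
        refine ⟨(hP.const_mul _).add_const _, fun z hz => ?_, fun z hz => ?_⟩
        · rw [hre]
          have : 0 ≤ (P z).re / B := div_nonneg (hPb z hz).1 hB0.le
          nlinarith
        · rw [hre]
          have hz' := sphere_subset_closedBall hz
          by_cases hzt : ‖z - ζ‖ < τ
          · refine (hτb (by rwa [dist_eq_norm])).le.trans ?_
            have : (P z).re / B ≤ 1 := (div_le_one hB0).2 (hPb z hz').2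
            norm_cast
            nlinarith
          · push Not at hzt
            refine (hu0 z (hc hz')).trans ?_
            have h1 := hPo z hz hzt
            have h2 : (P z).re / B ≤ (P z).re := div_le_self (hPb z hz').1 hB
            rw [le_div_iff₀ (by linarith)] at h1
            norm_cast
            nlinarith
      have hcont := (pf_cont hH) ζ hsp
      have hval : (((a / B : ℝ) : ℂ) * P ζ + (η : ℂ)).re < b := by
        rw [hre, hPζ, div_self hB0.ne']; linarith
      have hev := hcont.eventually_lt_const hval
      rw [eventually_nhdsWithin_iff] at hev
      filter_upwards [hev, hua] with w hw1 hw2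
      by_cases hwb : w ∈ ball c R
      · refine (pm_le hH hwb).trans_lt (lt_trans ?_ hb2)
        exact_mod_cast hw1 (ball_subset_closedBall hwb)
      · rw [pm_off u hwb]; exact hw2.trans ha2
    · filter_upwards [hua, isClosed_closedBall.isOpen_compl.mem_nhds hsp] with w hw hw2
      rw [pm_off u (fun h => hw2 (ball_subset_closedBall h))]
      exact hw.trans ha2
  · -- local submean property
    intro z0 hz0
    by_cases hb : z0 ∈ ball c R
    · filter_upwards [eventually_small (isOpen_ball.mem_nhds hb), self_mem_nhdsWithin]
        with ρ hρ hρ0 K hK hKb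
      rw [mem_Ioi] at hρ0
      rw [← EReal.le_of_forall_lt_iff_le]
      intro y hy
      have hy' : K z0 < y := by exact_mod_cast hy
      have hε : 0 < y - K z0 := by linarith
      have hind : ∃ F ∈ PF u c R, ∃ e < y - K z0, ∀ x ∈ sphere z0 ρ, (F x).re ≤ K x + e := by
        apply (isCompact_sphere z0 ρ).induction_on
          (p := fun s => ∃ F ∈ PF u c R, ∃ e < y - K z0, ∀ x ∈ s ∩ sphere z0 ρ,
            (F x).re ≤ K x + e) _ _ _ _ |> fun h => by simpa using h
        · exact ⟨_, hzero, 0, hε, by simp⟩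
        · rintro s t hst ⟨F, hF, e, he, h⟩
          exact ⟨F, hF, e, he, fun x hx => h x ⟨hst hx.1, hx.2⟩⟩
        · rintro s t ⟨F1, hF1, e1, he1, h1⟩ ⟨F2, hF2, e2, he2, h2⟩
          have hm : max e1 e2 < y - K z0 := max_lt he1 he2
          obtain ⟨F3, hF3, h3⟩ := pf_dir hR hF1 hF2 (ε := (y - K z0 - max e1 e2) / 2)
            (by linarith)
          refine ⟨F3, hF3, max e1 e2 + (y - K z0 - max e1 e2) / 2, by linarith, ?_⟩
          rintro x ⟨hx | hx, hxs⟩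
          · have := h1 x ⟨hx, hxs⟩
            have h4 := h3 x (ball_subset_closedBall (hρ (sphere_subset_closedBall hxs)))
            linarith [le_max_left e1 e2]
          · have := h2 x ⟨hx, hxs⟩
            have h4 := h3 x (ball_subset_closedBall (hρ (sphere_subset_closedBall hxs)))
            linarith [le_max_right e1 e2]
        · intro x hx
          have hxb := hρ (sphere_subset_closedBall hx)
          obtain ⟨F, hF, hFx⟩ := pf_lt hxb (y := ((K x + (y - K z0) / 2 : ℝ) : EReal))
            ((hKb x hx).trans_lt (by norm_cast; linarith))
          have hFx' : (F x).re < K x + (y - K z0) / 2 := by exact_mod_cast hFx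
          have hsub : sphere z0 ρ ⊆ closedBall c R :=
            sphere_subset_closedBall.trans (hρ.trans ball_subset_closedBall)
          have c1 : ContinuousWithinAt (fun x => (F x).re) (sphere z0 ρ) x :=
            (pf_cont hF).mono hsub x hx
          have c2 : ContinuousWithinAt (fun x => K x + (y - K z0) / 2) (sphere z0 ρ) x :=
            (hK.1.mono sphere_subset_closedBall x hx).add continuousWithinAt_const
          refine ⟨_, c1.eventually_lt c2 hFx', F, hF, (y - K z0) / 2, by linarith, ?_⟩
          rintro w ⟨hw, -⟩
          exact le_of_lt hw
      obtain ⟨F, hF, e, he, hFe⟩ := hind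
      refine (pm_le hF hb).trans ?_
      have := hm_le hρ0 (hm_mono (hm_re' hF.1 hR) (hρ.trans ball_subset_closedBall))
        (hm_add hK (hm_const e _)) hFe
      norm_cast
      linarith
    · exact subAt_touch (subAt_of_sub hV hu hz0) (Eventually.of_forall hge) (pm_off u hb)
  · -- lower bound
    have huc : ∃ A : ℝ, u c = A := by
      have h1 := hu.2.1 c (hc (mem_closedBall_self hR.le))
      exact ⟨(u c).toReal, (EReal.coe_toReal h1.ne hcb).symm⟩
    obtain ⟨A, hA⟩ := huc
    refine ⟨2 + 3 * (|A| + 1), fun z hz => ?_⟩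
    have hzb : z ∈ ball c R := closedBall_subset_ball (by linarith) hz
    unfold PM
    rw [if_pos hzb]
    refine le_iInf₂ fun F hF => ?_
    have hFc := hmaj F hF c (mem_ball_self hR)
    rw [hA] at hFc
    have hFc' : A ≤ (F c).re := by exact_mod_cast hFc
    have hF1 := hF.2.1 c (mem_closedBall_self hR.le)
    have hmaps : ∀ w ∈ ball (0:ℂ) R, c + w ∈ closedBall c R := by
      intro w hw
      simp at hw ⊢
      exact hw.le
    have hzc : ‖z - c‖ ≤ R / 2 := by simpa [dist_eq_norm] using hz
    have bc := Complex.borelCaratheodory (M := 1) (R := R) (z := z - c)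
      (f := fun w => F (c + w) - Complex.I * ((F c).im : ℂ)) one_pos
      ((hF.1.comp (by fun_prop) hmaps).sub_const _) (fun w hw => by
        have := hF.2.1 _ (hmaps w hw)
        simpa using this.le) hR (by simp; linarith)
    have hg0 : F c - Complex.I * ((F c).im : ℂ) = ((F c).re : ℂ) := by
      apply Complex.ext <;> simp
    simp only [add_zero, add_sub_cancel, hg0, Complex.norm_real] at bc
    have hn : |(F c).re| ≤ |A| + 1 := by
      rw [abs_le]
      constructor <;> linarith [neg_abs_le A, abs_nonneg A]
    have hb2 : 2 * 1 * ‖z - c‖ / (R - ‖z - c‖) + ‖(F c).re‖ * (R + ‖z - c‖) / (R - ‖z - c‖)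
        ≤ 2 + 3 * (|A| + 1) := by
      rw [← add_div, div_le_iff₀ (by linarith), Real.norm_eq_abs]
      have q1 := abs_nonneg (F c).re
      have q2 := norm_nonneg (z - c)
      nlinarith [mul_nonneg q1 (by linarith : 0 ≤ R - 2 * ‖z - c‖),
        mul_le_mul_of_nonneg_right hn (by linarith : 0 ≤ R - ‖z - c‖)]
    have hre : -(F z).re ≤ ‖F z - Complex.I * ((F c).im : ℂ)‖ := by
      have := Complex.abs_re_le_norm (F z - Complex.I * ((F c).im : ℂ))
      simp at this
      linarith [neg_abs_le (F z).re]
    norm_cast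
    linarith

theorem poisson_iter {V : Set ℂ} (hV : IsOpen V) {u : ℂ → EReal} (hu : SubharmonicOn u V)
    (hu0 : ∀ z ∈ V, u z ≤ 0) {R : ℝ} (hR : 0 < R) (T : Finset ℂ) 
    (hT : ∀ c ∈ T, closedBall c R ⊆ V ∧ u c ≠ ⊥) :
    ∃ u' : ℂ → EReal, SubharmonicOn u' V ∧ (∀ z ∈ V, u' z ≤ 0) ∧ (∀ z ∈ V, u z ≤ u' z) ∧
      (∀ z, (∀ c ∈ T, z ∉ ball c R) → u' z = u z) ∧
      ∃ N : ℝ, 0 ≤ N ∧ ∀ c ∈ T, ∀ z ∈ closedBall c (R / 2), ((-N : ℝ) : EReal) ≤ u' z := by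
  induction T using Finset.induction_on with
  | empty => exact ⟨u, hu, hu0, fun z _ => le_rfl, fun z _ => rfl, 0, le_rfl, by simp⟩
  | insert a T ha ih =>
    obtain ⟨u1, h1, h2, h3, h4, N1, hN1, h5⟩ := ih fun c hc => hT c (Finset.mem_insert_of_mem hc)
    obtain ⟨haV, hab⟩ := hT a (Finset.mem_insert_self _ _)
    have haV' : a ∈ V := haV (mem_closedBall_self hR.le)
    obtain ⟨u2, k1, k2, k3, k4, N2, k5⟩ := poisson_mod hV h1 h2 hR haV
      (fun h => hab (le_bot_iff.1 (h ▸ h3 a haV')))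
    refine ⟨u2, k1, k2, fun z hz => (h3 z hz).trans (k3 z hz), fun z hz => ?_, max N1 N2,
      hN1.trans (le_max_left _ _), fun c hc z hz => ?_⟩
    · rw [k4 z (hz a (Finset.mem_insert_self _ _)),
        h4 z fun c hc => hz c (Finset.mem_insert_of_mem hc)]
    · rcases Finset.mem_insert.1 hc with rfl | hcT
      · refine le_trans ?_ (k5 z hz)
        norm_cast
        exact neg_le_neg (le_max_right _ _)
      · have hzV : z ∈ V := (hT c hc).1 (closedBall_subset_closedBall (by linarith) hz)
        refine le_trans ?_ ((h5 c hcT z hz).trans (k3 z hzV))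
        norm_cast
        exact neg_le_neg (le_max_left _ _)

theorem sub_add_const {V : Set ℂ} {u : ℂ → EReal} (hu : SubharmonicOn u V) (b : ℝ) :
    SubharmonicOn (fun z => u z + (b : EReal)) V := by
  refine ⟨usc_add_real hu.1 continuousOn_const, fun z hz => ?_, fun c r hr hc K hK hb z hz => ?_⟩
  · exact EReal.add_lt_top (hu.2.1 z hz).ne (EReal.coe_ne_top _)
  · have := hu.2.2 c r hr hc (fun z => K z - b) (hm_sub hK (hm_const b _))
      (fun w hw => le_of_add_le (hb w hw)) z hz
    calc u z + (b : EReal) ≤ ((K z - b : ℝ) : EReal) + (b : EReal) := by gcongr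
      _ = (K z : EReal) := by norm_cast; simp

theorem sub_scale {V : Set ℂ} {u : ℂ → EReal} (hu : SubharmonicOn u V) {a : ℝ} (ha : 0 < a) :
    SubharmonicOn (fun z => u z * (a : EReal)) V := by
  have ha' : (0 : EReal) < a := by exact_mod_cast ha
  refine ⟨fun z hz y hy => ?_, fun z hz => ?_, fun c r hr hc K hK hb z hz => ?_⟩
  · change u z * (a : EReal) < y at hy
    rw [← EReal.lt_div_iff ha' (EReal.coe_ne_top _)] at hy
    filter_upwards [hu.1 z hz _ hy] with w hw
    change u w * (a : EReal) < y
    rwa [← EReal.lt_div_iff ha' (EReal.coe_ne_top _)]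
  · have := hu.2.1 z hz
    rw [← EReal.lt_div_iff ha' (EReal.coe_ne_top _)]
    rwa [EReal.top_div_of_pos_ne_top ha' (EReal.coe_ne_top _)]
  · rw [← EReal.le_div_iff_mul_le ha' (EReal.coe_ne_top _), ← EReal.coe_div]
    have hdiv : (fun z => K z / a) = fun z => a⁻¹ * K z := by ext; ring
    refine hu.2.2 c r hr hc (fun z => K z / a) ?_ ?_ z hz
    · rw [hdiv]; exact hm_smul _ hK
    · intro w hw
      rw [EReal.coe_div, EReal.le_div_iff_mul_le ha' (EReal.coe_ne_top _)]
      exact hb w hw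

theorem glue {U : Set ℂ} (hU : IsOpen U) (hUc : IsPreconnected U) {u : ℂ → EReal}
    (hu : SubharmonicOn u U) {z1 : ℂ} (hz1 : z1 ∈ U) (hne : u z1 ≠ ⊥) {p : ℂ} (hp : p ∈ U) :
    ∃ t > 0, ∃ v : ℂ → EReal, SubharmonicOn v univ ∧ (∀ z ∈ ball p t, u z = ⊥ → v z = ⊥) ∧
      v z1 ≠ ⊥ := by
  obtain ⟨s, hs, hsU⟩ := Metric.isOpen_iff.1 hU p hp
  obtain ⟨t, ht⟩ : ∃ t, t = s / 5 := ⟨_, rfl⟩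
  have ht0 : 0 < t := by rw [ht]; linarith
  have hcU : closedBall p (4 * t) ⊆ U := (closedBall_subset_ball (by linarith)).trans hsU
  obtain ⟨M, hM⟩ := usc_bdd (isCompact_closedBall p (4 * t)) (hu.1.mono hcU)
    (fun z hz => hu.2.1 z (hcU hz))
  set V := ball p (4 * t) with hV
  have hVo : IsOpen V := isOpen_ball
  have hVU : V ⊆ U := ball_subset_closedBall.trans hcU
  have huV : SubharmonicOn u V := ⟨hu.1.mono hVU, fun z hz => hu.2.1 z (hVU hz),
    fun c r hr hc => hu.2.2 c r hr (hc.trans hVU)⟩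
  have hw := sub_add_const huV (-M)
  have hw0 : ∀ z ∈ V, u z + ((-M : ℝ) : EReal) ≤ 0 := by
    intro z hz
    calc u z + ((-M : ℝ) : EReal) ≤ (M : EReal) + ((-M : ℝ) : EReal) := by
          gcongr; exact hM z (ball_subset_closedBall hz)
      _ = 0 := by norm_cast; simp
  have hwb : ∀ z, u z ≠ ⊥ → u z + ((-M : ℝ) : EReal) ≠ ⊥ := by
    intro z hz h
    rcases EReal.add_eq_bot_iff.1 h with h | h
    · exact hz h
    · exact EReal.coe_ne_bot _ h
  have hch : ∀ x : ℂ, ∃ c : ℂ, x ∈ sphere p (2 * t) → c ∈ ball x (t / 8) ∧ u c ≠ ⊥ := by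
    intro x
    by_cases hx : x ∈ sphere p (2 * t)
    · have hxU : x ∈ U := hcU (closedBall_subset_closedBall (by linarith)
        (sphere_subset_closedBall hx))
      obtain ⟨c, hc1, hc2⟩ := dense_ne_bot hU hUc hu hz1 hne (isOpen_ball (x := x) (ε := t / 8))
        ⟨x, mem_ball_self (by linarith), hxU⟩
      exact ⟨c, fun _ => ⟨hc1, hc2⟩⟩
    · exact ⟨0, fun h => absurd h hx⟩
  choose g hg using hch
  obtain ⟨S, hS1, hS2⟩ := (isCompact_sphere p (2 * t)).elim_nhds_subcover
    (fun x => ball (g x) (t / 8)) (fun x hx => isOpen_ball.mem_nhds (by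
      rw [mem_ball_comm]; exact (hg x hx).1))
  have hgd : ∀ x ∈ S, 2 * t - t / 8 < dist (g x) p ∧ dist (g x) p < 2 * t + t / 8 := by
    intro x hx
    have h1 := mem_ball.1 (hg x (hS1 x hx)).1
    have h2 := mem_sphere.1 (hS1 x hx)
    have h3 := dist_triangle (g x) x p
    have h4 := dist_triangle x (g x) p
    rw [dist_comm x (g x)] at h4
    constructor <;> linarith
  obtain ⟨u', hu', hu'0, hu'ge, hu'eq, N, hN0, hN⟩ := poisson_iter hVo hw hw0
    (R := t / 4) (by linarith) (S.image g) (by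
      intro c hc
      obtain ⟨x, hx, rfl⟩ := Finset.mem_image.1 hc
      refine ⟨fun y hy => ?_, hwb _ (hg x (hS1 x hx)).2⟩
      rw [hV, mem_ball]
      have := dist_triangle y (g x) p
      linarith [(hgd x hx).2, mem_closedBall.1 hy])
  have hcirc : ∀ z ∈ sphere p (2 * t), ((-N : ℝ) : EReal) ≤ u' z := by
    intro z hz
    obtain ⟨x, hx, hzx⟩ := mem_iUnion₂.1 (hS2 hz)
    refine hN (g x) (Finset.mem_image_of_mem g hx) z ?_
    exact closedBall_subset_closedBall (by linarith) (ball_subset_closedBall hzx)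
  set C := (N + 1) / (5 * t ^ 2) with hC
  have hC0 : 0 < C := by positivity
  have hCt : C * t ^ 2 * 5 = N + 1 := by rw [hC]; field_simp
  set q : ℂ → EReal := fun z => ((C * (‖z - p‖ ^ 2 - 9 * t ^ 2) : ℝ) : EReal) with hq
  have hqc : Continuous q := by
    apply continuous_coe_real_ereal.comp
    fun_prop
  have hq3 : ∀ z, 3 * t ≤ ‖z - p‖ → 0 ≤ q z := by
    intro z hz
    have h9 : 9 * t ^ 2 ≤ ‖z - p‖ ^ 2 := by nlinarith
    have : 0 ≤ C * (‖z - p‖ ^ 2 - 9 * t ^ 2) := mul_nonneg hC0.le (by linarith)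
    simp only [hq]
    exact_mod_cast this
  have hq2 : ∀ z, ‖z - p‖ = 2 * t → q z ≤ u' z := by
    intro z hz
    refine le_trans ?_ (hcirc z (by rwa [mem_sphere, dist_eq_norm]))
    simp only [hq]
    rw [hz]
    norm_cast
    nlinarith
  have hmemV : ∀ z, z ∈ V ↔ ‖z - p‖ < 4 * t := fun z => by rw [hV, mem_ball, dist_eq_norm]
  classical
  obtain ⟨v, hv⟩ : ∃ v : ℂ → EReal, v = fun z => if ‖z - p‖ < 2 * t then u' z else
    if ‖z - p‖ < 3 * t then max (u' z) (q z) else q z := ⟨_, rfl⟩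
  have hv1 : ∀ z, ‖z - p‖ < 2 * t → v z = u' z := fun z hz => by rw [hv]; simp [hz]
  have hv3 : ∀ z, 3 * t ≤ ‖z - p‖ → v z = q z := fun z hz => by
    rw [hv]; simp only [if_neg (by linarith : ¬ ‖z - p‖ < 2 * t), if_neg hz.not_gt]
  have hv2 : ∀ z ∈ V, 2 * t ≤ ‖z - p‖ → v z = max (u' z) (q z) := fun z hzV hz => by
    by_cases h3 : ‖z - p‖ < 3 * t
    · rw [hv]; simp only [if_neg hz.not_gt, if_pos h3]
    · push Not at h3
      rw [hv3 z h3, max_eq_right ((hu'0 z hzV).trans (hq3 z h3))]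
  have hvge : ∀ z ∈ V, u' z ≤ v z := fun z hz => by
    rcases lt_or_ge ‖z - p‖ (2 * t) with h | h
    · rw [hv1 z h]
    · rw [hv2 z hz h]; exact le_max_left _ _
  have hvle : ∀ z ∈ V, v z ≤ max (u' z) (q z) := fun z hz => by
    rcases lt_or_ge ‖z - p‖ (2 * t) with h | h
    · rw [hv1 z h]; exact le_max_left _ _
    · rw [hv2 z hz h]
  have hvq : ∀ z, 2 * t ≤ ‖z - p‖ → q z ≤ v z := fun z h => by
    rcases lt_or_ge ‖z - p‖ (4 * t) with h4 | h4
    · rw [hv2 z ((hmemV z).2 h4) h]; exact le_max_right _ _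
    · rw [hv3 z (by linarith)]
  have hnc : Continuous fun z : ℂ => ‖z - p‖ := by fun_prop
  have husc' : ∀ z ∈ V, ∀ y, u' z < y → ∀ᶠ w in 𝓝 z, u' w < y := fun z hz y hy => by
    have := hu'.1 z hz y hy
    rwa [hVo.nhdsWithin_eq hz] at this
  refine ⟨t, ht0, v, sub_of_subAt ?_ ?_ ?_, ?_, ?_⟩
  · intro z _ y hy
    rw [nhdsWithin_univ]
    rcases lt_or_ge ‖z - p‖ (2 * t) with h | h
    · rw [hv1 z h] at hy
      filter_upwards [husc' z ((hmemV z).2 (by linarith)) y hy,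
        hnc.continuousAt.eventually_lt_const h] with w hw1 hw2
      rwa [hv1 w hw2]
    rcases lt_or_ge ‖z - p‖ (4 * t) with h4 | h4
    · have hzV := (hmemV z).2 h4
      rw [hv2 z hzV h, max_lt_iff] at hy
      filter_upwards [husc' z hzV y hy.1, hqc.continuousAt.eventually_lt_const hy.2,
        hVo.mem_nhds hzV] with w hw1 hw2 hw3
      exact (hvle w hw3).trans_lt (max_lt hw1 hw2)
    · rw [hv3 z (by linarith)] at hy
      filter_upwards [hqc.continuousAt.eventually_lt_const hy,
        hnc.continuousAt.eventually_const_lt (by linarith : 3 * t < ‖z - p‖)] with w hw1 hw2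
      rwa [hv3 w hw2.le]
  · intro z _
    rcases lt_or_ge ‖z - p‖ (4 * t) with h4 | h4
    · have hzV := (hmemV z).2 h4
      exact (hvle z hzV).trans_lt (max_lt (hu'.2.1 z hzV) (EReal.coe_lt_top _))
    · rw [hv3 z (by linarith)]; exact EReal.coe_lt_top _
  · intro z _
    have hA : z ∈ V → v z = u' z → SubAt v z := fun hzV he =>
      subAt_touch (subAt_of_sub hVo hu' hzV) (by
        filter_upwards [hVo.mem_nhds hzV] with w hw using hvge w hw) he
    rcases lt_trichotomy ‖z - p‖ (2 * t) with h | h | h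
    · exact hA ((hmemV z).2 (by linarith)) (hv1 z h)
    · have hzV := (hmemV z).2 (by linarith)
      refine hA hzV ?_
      rw [hv2 z hzV h.ge, max_eq_left (hq2 z h)]
    · by_cases he : v z = q z
      · refine subAt_touch (u := q) (subAt_sq p z hC0.le) ?_ he
        filter_upwards [hnc.continuousAt.eventually_const_lt h] with w hw using hvq w hw.le
      · have h4 : ‖z - p‖ < 4 * t := by
          by_contra h4
          exact he (hv3 z (by linarith))
        have hzV := (hmemV z).2 h4
        refine hA hzV ?_
        rw [hv2 z hzV h.le] at he ⊢
        rcases max_choice (u' z) (q z) with h5 | h5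
        · exact h5
        · exact absurd h5 he
  · intro z hz hzb
    have hz' : dist z p < t := hz
    rw [hv1 z (by rw [← dist_eq_norm]; linarith), hu'eq z, hzb, EReal.bot_add]
    intro c hc hzc
    obtain ⟨x, hx, rfl⟩ := Finset.mem_image.1 hc
    have h1 := dist_triangle (g x) z p
    rw [dist_comm (g x) z] at h1
    linarith [(hgd x hx).1, mem_ball.1 hzc]
  · intro hb
    rcases lt_or_ge ‖z1 - p‖ (4 * t) with h4 | h4
    · have hzV := (hmemV z1).2 h4
      exact hwb z1 hne (le_bot_iff.1 (hb ▸ (hu'ge z1 hzV).trans (hvge z1 hzV)))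
    · rw [hv3 z1 (by linarith)] at hb
      exact EReal.coe_ne_bot _ hb

theorem dec_sub {V : Set ℂ} (hV : IsOpen V) {S : ℕ → ℂ → EReal} (hS : ∀ n, SubharmonicOn (S n) V)
    (hanti : ∀ z ∈ V, Antitone fun n => S n z) : SubharmonicOn (fun z => ⨅ n, S n z) V := by
  refine ⟨fun z hz y hy => ?_, fun z hz => (iInf_le _ 0).trans_lt ((hS 0).2.1 z hz), ?_⟩
  · obtain ⟨n, hn⟩ := iInf_lt_iff.1 hy
    filter_upwards [(hS n).1 z hz y hn] with w hw
    exact (iInf_le _ n).trans_lt hw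
  intro c r hr hc K hK hb z0 hz0
  rw [← EReal.le_of_forall_lt_iff_le]
  intro y hy
  have hy' : K z0 < y := by exact_mod_cast hy
  have hε : 0 < y - K z0 := by linarith
  have hind : ∃ n, ∀ x ∈ sphere c r, S n x ≤ ((K x + (y - K z0) : ℝ) : EReal) := by
    apply (isCompact_sphere c r).induction_on
      (p := fun s => ∃ n, ∀ x ∈ s ∩ sphere c r, S n x ≤ ((K x + (y - K z0) : ℝ) : EReal))
        _ _ _ _ |> fun h => by simpa using h
    · exact ⟨0, by simp⟩
    · rintro s t hst ⟨n, h⟩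
      exact ⟨n, fun x hx => h x ⟨hst hx.1, hx.2⟩⟩
    · rintro s t ⟨n, hn⟩ ⟨m, hm⟩
      refine ⟨max n m, ?_⟩
      rintro x ⟨hx | hx, hxs⟩
      · exact (hanti x (hc (sphere_subset_closedBall hxs)) (le_max_left n m)).trans (hn x ⟨hx, hxs⟩)
      · exact (hanti x (hc (sphere_subset_closedBall hxs)) (le_max_right n m)).trans
          (hm x ⟨hx, hxs⟩)
    · intro x hx
      have hlt : ⨅ n, S n x < ((K x + (y - K z0) : ℝ) : EReal) :=
        (hb x hx).trans_lt (by norm_cast; linarith)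
      obtain ⟨n, hn⟩ := iInf_lt_iff.1 hlt
      obtain ⟨a, ha1, ha2⟩ := EReal.lt_iff_exists_real_btwn.1 hn
      have ha3 : a < K x + (y - K z0) := by exact_mod_cast ha2
      have c1 := (hS n).1.mono (sphere_subset_closedBall.trans hc) x hx a ha1
      have c2 : ContinuousWithinAt (fun x => K x + (y - K z0)) (sphere c r) x :=
        (hK.1.mono sphere_subset_closedBall x hx).add continuousWithinAt_const
      refine ⟨_, c1.and (c2.eventually_const_lt ha3), n, ?_⟩
      rintro w ⟨⟨hw1, hw2⟩, -⟩
      refine (le_of_lt hw1).trans ?_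
      exact_mod_cast hw2.le
  obtain ⟨n, hn⟩ := hind
  refine (iInf_le _ n).trans ?_
  have := (hS n).2.2 c r hr hc (fun x => K x + (y - K z0)) (hm_add hK (hm_const _ _)) hn z0 hz0
  refine this.trans ?_
  norm_cast
  linarith

theorem sh_add {u v : ℂ → EReal} (hu : SubharmonicOn u univ) (hv : SubharmonicOn v univ) :
    SubharmonicOn (fun z => u z + v z) univ := by
  refine sub_of_subAt ?_ (fun z hz => EReal.add_lt_top (hu.2.1 z hz).ne (hv.2.1 z hz).ne) ?_
  · apply hu.1.add' hv.1
    intro z hz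
    exact EReal.continuousAt_add (Or.inl (hu.2.1 z hz).ne) (Or.inr (hv.2.1 z hz).ne)
  · intro z hz
    exact subAt_add univ_mem hu.1 hv.1 hu.2.1 hv.2.1 (subAt_of_sub isOpen_univ hu hz)
      (subAt_of_sub isOpen_univ hv hz)

theorem sub_zero_fun : SubharmonicOn (fun _ => (0 : EReal)) univ := by
  refine sub_of_subAt upperSemicontinuousOn_const (fun z _ => by simp) fun z _ => ?_
  simpa using subAt_sq (a := 0) (b := 0) 0 z le_rfl

theorem countable_sum {v : ℕ → ℂ → EReal} (hv : ∀ i, SubharmonicOn (v i) univ) {z1 : ℂ}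
    (h1 : ∀ i, v i z1 ≠ ⊥) :
    ∃ w : ℂ → EReal, SubharmonicOn w univ ∧ w z1 ≠ ⊥ ∧ ∀ z, (∃ i, v i z = ⊥) → w z = ⊥ := by
  have hM : ∀ i : ℕ, ∃ M : ℝ, ∀ z ∈ closedBall (0:ℂ) (max (i : ℝ) ‖z1‖), v i z ≤ (M : EReal) :=
    fun i => usc_bdd (isCompact_closedBall _ _) ((hv i).1.mono (subset_univ _))
      (fun z _ => (hv i).2.1 z (mem_univ z))
  choose M hM using hM
  have ha : ∀ i, ∃ a : ℝ, v i z1 = a := fun i =>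
    ⟨(v i z1).toReal, (EReal.coe_toReal ((hv i).2.1 z1 (mem_univ _)).ne (h1 i)).symm⟩
  choose a ha using ha
  have haM : ∀ i, a i ≤ M i := fun i => by
    have := hM i z1 (by simp)
    rw [ha] at this
    exact_mod_cast this
  set e : ℕ → ℝ := fun i => (1 / 2) ^ i / (M i - a i + 1) with he
  have he0 : ∀ i, 0 < e i := fun i => div_pos (by positivity) (by linarith [haM i])
  set w : ℕ → ℂ → EReal := fun i z => (v i z + ((-M i : ℝ) : EReal)) * (e i : EReal) with hw
  have hws : ∀ i, SubharmonicOn (w i) univ := fun i =>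
    sub_scale (sub_add_const (hv i) (-M i)) (he0 i)
  have hw0 : ∀ i : ℕ, ∀ z, ‖z‖ ≤ i → w i z ≤ 0 := by
    intro i z hz
    have h2 : v i z ≤ M i := hM i z (by simp [hz])
    have h3 : v i z + ((-M i : ℝ) : EReal) ≤ 0 := by
      calc v i z + ((-M i : ℝ) : EReal) ≤ (M i : EReal) + ((-M i : ℝ) : EReal) := by gcongr
        _ = 0 := by norm_cast; simp
    exact mul_nonpos_of_nonpos_of_nonneg h3 (by exact_mod_cast (he0 i).le)
  have hw1 : ∀ i : ℕ, ((-(1 / 2) ^ i : ℝ) : EReal) ≤ w i z1 := by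
    intro i
    simp only [hw, ha i]
    norm_cast
    have hp : 0 < M i - a i + 1 := by linarith [haM i]
    have : e i * (M i - a i + 1) = (1 / 2) ^ i := by simp only [he]; field_simp
    nlinarith [he0 i]
  have hwb : ∀ i z, v i z = ⊥ → w i z = ⊥ := by
    intro i z h
    simp only [hw, h, EReal.bot_add]
    exact EReal.bot_mul_coe_of_pos (he0 i)
  set S : ℕ → ℂ → EReal := fun n z => ∑ i ∈ Finset.range n, w i z with hSdef
  have hS : ∀ n, SubharmonicOn (S n) univ := by
    intro n
    induction n with
    | zero => simpa [hSdef] using sub_zero_fun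
    | succ n ih =>
      simp only [hSdef, Finset.sum_range_succ]
      exact sh_add ih (hws n)
  have hanti : ∀ (k : ℕ) (z : ℂ), ‖z‖ ≤ k → Antitone fun n => S (n + k) z := by
    intro k z hz
    refine antitone_nat_of_succ_le fun n => ?_
    have h5 : S (n + 1 + k) z = S (n + k) z + w (n + k) z := by
      rw [show n + 1 + k = (n + k) + 1 by ring]
      simp only [hSdef, Finset.sum_range_succ]
    rw [h5]
    have := hw0 (n + k) z (hz.trans (by push_cast; linarith [(Nat.cast_nonneg n : (0:ℝ) ≤ n)]))
    calc S (n + k) z + w (n + k) z ≤ S (n + k) z + 0 := by gcongr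
      _ = _ := add_zero _
  set W : ℂ → EReal := fun z => ⨅ n, S (n + ⌈‖z‖⌉₊) z with hW
  have hloc : ∀ (N : ℕ) (z : ℂ), z ∈ ball (0:ℂ) N → W z = ⨅ n, S (n + N) z := by
    intro N z hz
    have hz' : ‖z‖ < N := by simpa using hz
    have hk : ⌈‖z‖⌉₊ ≤ N := Nat.ceil_le.2 hz'.le
    have := (hanti ⌈‖z‖⌉₊ z (Nat.le_ceil _)).iInf_nat_add (N - ⌈‖z‖⌉₊)
    simp only [hW]
    rw [← this]
    congr 1
    ext n
    congr 1
    omega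
  have hG : ∀ N : ℕ, SubharmonicOn (fun z => ⨅ n, S (n + N) z) (ball (0:ℂ) N) := by
    intro N
    refine dec_sub isOpen_ball (fun n => ?_) fun z hz => hanti N z (by simpa using (mem_ball.1 hz).le)
    exact ⟨(hS _).1.mono (subset_univ _), fun z _ => (hS _).2.1 z (mem_univ _),
      fun c r hr _ => (hS _).2.2 c r hr (subset_univ _)⟩
  have hN : ∀ z : ℂ, ∃ N : ℕ, z ∈ ball (0:ℂ) N := fun z => by
    obtain ⟨N, hN⟩ := exists_nat_gt ‖z‖
    exact ⟨N, by simpa using hN⟩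
  refine ⟨W, sub_of_subAt ?_ ?_ ?_, ?_, ?_⟩
  · intro z _ y hy
    obtain ⟨N, hzN⟩ := hN z
    change W z < y at hy
    rw [hloc N z hzN] at hy
    have := (hG N).1 z hzN y hy
    rw [isOpen_ball.nhdsWithin_eq hzN] at this
    rw [nhdsWithin_univ]
    filter_upwards [this, isOpen_ball.mem_nhds hzN] with x hx hxN
    change W x < y
    rwa [hloc N x hxN]
  · intro z _
    exact (iInf_le _ 0).trans_lt ((hS _).2.1 z (mem_univ _))
  · intro z _
    obtain ⟨N, hzN⟩ := hN z
    refine subAt_touch (subAt_of_sub isOpen_ball (hG N) hzN) ?_ (hloc N z hzN)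
    filter_upwards [isOpen_ball.mem_nhds hzN] with x hx
    rw [hloc N x hx]
  · have hlow : ∀ n, ((-(∑ i ∈ Finset.range n, (1 / 2 : ℝ) ^ i) : ℝ) : EReal) ≤ S n z1 := by
      intro n
      induction n with
      | zero => simp [hSdef]
      | succ n ih =>
        simp only [hSdef, Finset.sum_range_succ]
        rw [neg_add, EReal.coe_add]
        exact add_le_add ih (hw1 n)
    have hW2 : ((-2 : ℝ) : EReal) ≤ W z1 := by
      refine le_iInf fun n => le_trans ?_ (hlow _)
      exact EReal.coe_le_coe_iff.2 (neg_le_neg (sum_geometric_two_le _))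
    intro h
    rw [h] at hW2
    exact EReal.coe_ne_bot _ (le_bot_iff.1 hW2)
  · rintro z ⟨i, hi⟩
    have hSb : S (i + 1 + ⌈‖z‖⌉₊) z = ⊥ := by
      simp only [hSdef]
      rw [← Finset.add_sum_erase _ _ (Finset.mem_range.2 (by omega : i < i + 1 + ⌈‖z‖⌉₊)),
        hwb i z hi, EReal.bot_add]
    exact le_bot_iff.1 (hSb ▸ iInf_le (fun n => S (n + ⌈‖z‖⌉₊) z) (i + 1))

theorem polar_bot {U : Set ℂ} (hU : IsOpen U) (hUc : IsPreconnected U) {u : ℂ → EReal}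
    (hu : SubharmonicOn u U) {z1 : ℂ} (hz1 : z1 ∈ U) (hne : u z1 ≠ ⊥) {A : Set ℂ} (hAU : A ⊆ U)
    (hA : ∀ z ∈ A, u z = ⊥) : PolarSet A := by
  have hg : ∀ p : ℂ, ∃ t > 0, ∃ v : ℂ → EReal, SubharmonicOn v univ ∧
      (p ∈ U → ∀ z ∈ ball p t, u z = ⊥ → v z = ⊥) ∧ v z1 ≠ ⊥ := by
    intro p
    by_cases hp : p ∈ U
    · obtain ⟨t, ht, v, h1, h2, h3⟩ := glue hU hUc hu hz1 hne hp
      exact ⟨t, ht, v, h1, fun _ => h2, h3⟩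
    · exact ⟨1, one_pos, _, sub_zero_fun, fun h => absurd h hp, by simp⟩
  choose t ht v hv1 hv2 hv3 using hg
  obtain ⟨s, hsU, hsc, hs⟩ := TopologicalSpace.countable_cover_nhdsWithin
    (s := U) (f := fun p => ball p (t p)) (fun p _ => mem_nhdsWithin_of_mem_nhds (ball_mem_nhds p (ht p)))
  have hsn : s.Nonempty := by
    obtain ⟨p, hp, -⟩ := mem_iUnion₂.1 (hs hz1)
    exact ⟨p, hp⟩
  obtain ⟨f, hf⟩ := hsc.exists_eq_range hsn
  obtain ⟨w, hw1, hw2, hw3⟩ := countable_sum (v := fun i => v (f i)) (fun i => hv1 _) (z1 := z1)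
    (fun i => hv3 _)
  refine ⟨w, hw1, fun h => hw2 (h z1), fun z hz => hw3 z ?_⟩
  obtain ⟨p, hp, hzp⟩ := mem_iUnion₂.1 (hs (hAU hz))
  have hpU := hsU hp
  rw [hf] at hp
  obtain ⟨i, rfl⟩ := hp
  exact ⟨i, hv2 _ hpU z hzp (hA z hz)⟩

/-- if `f` is holomorphic on a domain `U ⊆ ℂ`, `E ⊆ ℂⁿ` meets `f(U)`, and
`f⁻¹(f(U) ∩ E)` is non-polar, then every plurisubharmonic `h` on `ℂⁿ` with `h = -∞` on
`E` satisfies `h ∘ f ≡ -∞` on `U`; hence `f(U) ⊆ E*_{ℂⁿ}`. -/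
theorem curve_in_pluripolar_hull {n : ℕ} (U : Set ℂ) (hUo : IsOpen U)
    (hUc : IsConnected U) (f : ℂ → Fin n → ℂ) (hf : DifferentiableOn ℂ f U)
    (E : Set (Fin n → ℂ))
    (hne : (f '' U ∩ E).Nonempty)
    (hnp : ¬ PolarSet (U ∩ f ⁻¹' (f '' U ∩ E))) :
    (∀ h : (Fin n → ℂ) → EReal, PlurisubharmonicOn h Set.univ →
        (∀ w ∈ E, h w = ⊥) → ∀ z ∈ U, h (f z) = ⊥) ∧
    f '' U ⊆ PluripolarHull E Set.univ := by
  have key : ∀ h : (Fin n → ℂ) → EReal, PlurisubharmonicOn h Set.univ →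
        (∀ w ∈ E, h w = ⊥) → ∀ z ∈ U, h (f z) = ⊥ := by
    intro h hh hE z hz
    by_contra hb
    exact hnp (polar_bot hUo hUc.isPreconnected (comp_sub hUo hf hh) hz hb inter_subset_left
      (fun w hw => hE _ hw.2.2))
  refine ⟨key, ?_⟩
  rintro _ ⟨z, hz, rfl⟩
  exact ⟨mem_univ _, fun φ hφ hE => key φ hφ hE z hz⟩
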